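/- Let Σ = {A, B} be any pair of 2×2 matrices all of whose entries lie in {0, 1}. Then Σ has the oligo-vertex property: there exist a real number α > 0, a real number d > 0, and a natural number k₀ such that for every integer k ≥ k₀ and every a ∈ ℝ², N_k(Σ, a) ≤ α·k^d. -/

import Mathlib

open Matrix Set

noncomputable section

/-- `XSeq S a k` is the set of all vectors `T_{k-1} ⋯ T_0 · a` with each `T_j ∈ S`
(and `XSeq S a 0 = {a}`). -/
def XSeq {n : ℕ} (S : Set (Matrix (Fin n) (Fin n) ℝ)) (a : Fin n → ℝ) : ℕ → Set (Fin n → ℝ)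
  | 0 => {a}
  | k + 1 => ⋃ A ∈ S, A.mulVec '' XSeq S a k

/-- `PHull S a k` is the convex hull of `XSeq S a k`. -/
def PHull {n : ℕ} (S : Set (Matrix (Fin n) (Fin n) ℝ)) (a : Fin n → ℝ) (k : ℕ) :
    Set (Fin n → ℝ) :=
  convexHull ℝ (XSeq S a k)

/-- `EPts S a k` is the set of extreme points of `PHull S a k`. -/
def EPts {n : ℕ} (S : Set (Matrix (Fin n) (Fin n) ℝ)) (a : Fin n → ℝ) (k : ℕ) :
    Set (Fin n → ℝ) :=
  Set.extremePoints ℝ (PHull S a k)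

/-- `NExt S a k` is the number of extreme points of `PHull S a k`. -/
def NExt {n : ℕ} (S : Set (Matrix (Fin n) (Fin n) ℝ)) (a : Fin n → ℝ) (k : ℕ) : ℕ :=
  (EPts S a k).ncard


abbrev M2 := Matrix (Fin 2) (Fin 2) ℝ

/-- the linear functional with coefficients `c` -/
def phi (c : ℝ × ℝ) (x : Fin 2 → ℝ) : ℝ := c.1 * x 0 + c.2 * x 1

def act (c : ℝ × ℝ) (T : M2) : ℝ × ℝ :=
  (c.1 * T 0 0 + c.2 * T 1 0, c.1 * T 0 1 + c.2 * T 1 1)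

lemma mv0 (T : M2) (v : Fin 2 → ℝ) : (T *ᵥ v) 0 = T 0 0 * v 0 + T 0 1 * v 1 := by
  simp [Matrix.mulVec, dotProduct, Fin.sum_univ_two]

lemma mv1 (T : M2) (v : Fin 2 → ℝ) : (T *ᵥ v) 1 = T 1 0 * v 0 + T 1 1 * v 1 := by
  simp [Matrix.mulVec, dotProduct, Fin.sum_univ_two]

lemma phi_act (c : ℝ × ℝ) (T : M2) (v : Fin 2 → ℝ) : phi c (T *ᵥ v) = phi (act c T) v := by
  simp only [phi, act, mv0, mv1]; ring

/-- all products of `k` matrices -/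
def Mset (S : Set M2) : ℕ → Set M2
  | 0 => {1}
  | k + 1 => {M | ∃ T ∈ S, ∃ N ∈ Mset S k, M = T * N}

lemma XSeq_eq (S : Set M2) (a : Fin 2 → ℝ) (k : ℕ) :
    XSeq S a k = (fun M : M2 => M *ᵥ a) '' Mset S k := by
  induction k with
  | zero => simp only [XSeq, Mset, Set.image_singleton, Matrix.one_mulVec]
  | succ k ih =>
    ext x
    simp only [XSeq, ih, Mset, mem_iUnion, mem_image, mem_ofPred_eq]
    constructor
    · rintro ⟨T, hT, y, ⟨N, hN, rfl⟩, rfl⟩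
      exact ⟨T * N, ⟨T, hT, N, hN, rfl⟩, by rw [Matrix.mulVec_mulVec]⟩
    · rintro ⟨M, ⟨T, hT, N, hN, rfl⟩, rfl⟩
      exact ⟨T, hT, N *ᵥ a, ⟨N, hN, rfl⟩, by rw [Matrix.mulVec_mulVec]⟩

lemma Mset_finite (S : Set M2) (hS : S.Finite) (k : ℕ) : (Mset S k).Finite := by
  induction k with
  | zero => simp [Mset]
  | succ k ih =>
    refine (Set.Finite.image2 (fun T N : M2 => T * N) hS ih).subset ?_
    rintro M ⟨T, hT, N, hN, rfl⟩
    exact ⟨T, hT, N, hN, rfl⟩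

def NN (S : Set M2) : Prop := ∀ T ∈ S, ∀ i j, 0 ≤ T i j

lemma mv_nonneg {T : M2} (hT : ∀ i j, 0 ≤ T i j) {v : Fin 2 → ℝ} (hv : 0 ≤ v) : 0 ≤ T *ᵥ v := by
  have h0 := hv 0
  have h1 := hv 1
  simp only [Pi.zero_apply] at h0 h1
  intro i
  fin_cases i
  · simp only [Fin.zero_eta, Pi.zero_apply, mv0]
    have := mul_nonneg (hT 0 0) h0
    have := mul_nonneg (hT 0 1) h1
    linarith
  · simp only [Fin.mk_one, Pi.zero_apply, mv1]
    have := mul_nonneg (hT 1 0) h0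
    have := mul_nonneg (hT 1 1) h1
    linarith

lemma mul_nn {T N : M2} (hT : ∀ i j, 0 ≤ T i j) (hN : ∀ i j, 0 ≤ N i j) :
    ∀ i j, 0 ≤ (T * N) i j := by
  intro i j
  rw [Matrix.mul_apply]
  exact Finset.sum_nonneg fun l _ => mul_nonneg (hT i l) (hN l j)

lemma one_nn : ∀ i j, 0 ≤ (1 : M2) i j := by
  intro i j
  rw [Matrix.one_apply]; split_ifs <;> norm_num

lemma Mset_nn {S : Set M2} (hS : NN S) (k : ℕ) : ∀ M ∈ Mset S k, ∀ i j, 0 ≤ M i j := by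
  induction k with
  | zero => rintro M rfl; exact one_nn
  | succ k ih =>
    rintro M ⟨T, hT, N, hN, rfl⟩
    exact mul_nn (hS T hT) (ih N hN)

/-- polynomially many matrices suffice for maximizing functionals in `C` (nonnegative start) -/
def PG (S : Set M2) (C : Set (ℝ × ℝ)) : Prop :=
  ∃ K d : ℕ, ∀ k : ℕ, ∃ G : Finset M2, G.card ≤ K * (k + 1) ^ d ∧ (∀ g ∈ G, g ∈ Mset S k) ∧
    ∀ c ∈ C, ∀ a : Fin 2 → ℝ, 0 ≤ a → ∀ M ∈ Mset S k, ∃ g ∈ G, phi c (M *ᵥ a) ≤ phi c (g *ᵥ a)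

lemma PG_empty (S : Set M2) : PG S ∅ := ⟨0, 0, fun k => ⟨∅, by simp, by simp, by simp⟩⟩

lemma PG_mono {S : Set M2} {C D : Set (ℝ × ℝ)} (h : D ⊆ C) (hC : PG S C) : PG S D := by
  obtain ⟨K, d, H⟩ := hC
  refine ⟨K, d, fun k => ?_⟩
  obtain ⟨G, h1, h2, h3⟩ := H k
  exact ⟨G, h1, h2, fun c hc => h3 c (h hc)⟩

lemma PG_union {S : Set M2} {C D : Set (ℝ × ℝ)} (hC : PG S C) (hD : PG S D) : PG S (C ∪ D) := by
  classical
  obtain ⟨K, d, H⟩ := hC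
  obtain ⟨K', d', H'⟩ := hD
  refine ⟨K + K', d + d', fun k => ?_⟩
  obtain ⟨G, h1, h2, h3⟩ := H k
  obtain ⟨G', h1', h2', h3'⟩ := H' k
  refine ⟨G ∪ G', ?_, ?_, ?_⟩
  · refine (Finset.card_union_le _ _).trans ?_
    have e1 : (k + 1) ^ d ≤ (k + 1) ^ (d + d') := Nat.pow_le_pow_right (by omega) (by omega)
    have e2 : (k + 1) ^ d' ≤ (k + 1) ^ (d + d') := Nat.pow_le_pow_right (by omega) (by omega)
    nlinarith [Nat.mul_le_mul_left K e1, Nat.mul_le_mul_left K' e2]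
  · intro g hg
    rcases Finset.mem_union.1 hg with hg | hg
    · exact h2 g hg
    · exact h2' g hg
  · rintro c (hc | hc) a ha M hM
    · obtain ⟨g, hg, hh⟩ := h3 c hc a ha M hM
      exact ⟨g, Finset.mem_union_left _ hg, hh⟩
    · obtain ⟨g, hg, hh⟩ := h3' c hc a ha M hM
      exact ⟨g, Finset.mem_union_right _ hg, hh⟩

lemma PG_step {A B : M2} (hS : NN {A, B}) (C : Bool → Set (ℝ × ℝ)) (nxt : Bool → Bool)
    (T O : Bool → M2) (hT : ∀ i, T i ∈ ({A, B} : Set M2))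
    (hO : ∀ i, ∀ T' ∈ ({A, B} : Set M2), T' = T i ∨ T' = O i)
    (C' : Set (ℝ × ℝ)) (hC' : PG {A, B} C')
    (hact : ∀ i, ∀ c ∈ C i, act c (T i) ∈ C (nxt i) ∪ C')
    (hforce : ∀ i, ∀ c ∈ C i, ∀ T₂ ∈ ({A, B} : Set M2), ∃ T₃ ∈ ({A, B} : Set M2),
      ∀ v : Fin 2 → ℝ, 0 ≤ v → phi c (O i *ᵥ (T₂ *ᵥ v)) ≤ phi c (T i *ᵥ (T₃ *ᵥ v))) :
    ∀ i, PG {A, B} (C i) := by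
  classical
  obtain ⟨K, d, H⟩ := hC'
  have key : ∀ k : ℕ, ∀ i, ∃ G : Finset M2, G.card ≤ (K + 2) * (k + 1) ^ (d + 1) ∧
      (∀ g ∈ G, g ∈ Mset {A, B} k) ∧
      ∀ c ∈ C i, ∀ a : Fin 2 → ℝ, 0 ≤ a → ∀ M ∈ Mset {A, B} k,
        ∃ g ∈ G, phi c (M *ᵥ a) ≤ phi c (g *ᵥ a) := by
    intro k
    induction k with
    | zero =>
      intro i
      refine ⟨{1}, by simp, by simp [Mset], ?_⟩
      rintro c _ a _ M rfl
      exact ⟨1, by simp, le_rfl⟩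
    | succ k ih =>
      intro i
      cases k with
      | zero =>
        refine ⟨{A, B}, ?_, ?_, ?_⟩
        · refine Finset.card_le_two.trans ?_
          have : 1 ≤ (0 + 1 + 1) ^ (d + 1) := Nat.one_le_pow _ _ (by norm_num)
          nlinarith
        · intro g hg
          exact ⟨g, by simpa using hg, 1, rfl, by simp⟩
        · rintro c _ a _ M ⟨T', hT', N, hN, rfl⟩
          have : N = 1 := hN
          subst this
          exact ⟨T' * 1, by simpa using hT', le_rfl⟩
      | succ k =>
        obtain ⟨G, h1, h2, h3⟩ := ih (nxt i)
        obtain ⟨G', h1', h2', h3'⟩ := H (k + 1)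
        refine ⟨(G ∪ G').image (fun g => T i * g), ?_, ?_, ?_⟩
        · refine Finset.card_image_le.trans ((Finset.card_union_le _ _).trans ?_)
          have e : (k + 1 + 1) ^ (d + 1) + (k + 1 + 1) ^ d ≤ (k + 1 + 1 + 1) ^ (d + 1) := by
            have : (k + 1 + 1) ^ d ≤ (k + 1 + 1 + 1) ^ d := Nat.pow_le_pow_left (by omega) _
            rw [pow_succ, pow_succ]; nlinarith
          have : K * (k + 1 + 1) ^ d ≤ (K + 2) * (k + 1 + 1) ^ d := Nat.mul_le_mul_right _ (by omega)
          nlinarith [Nat.mul_le_mul_left (K + 2) e]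
        · intro g hg
          obtain ⟨g', hg', rfl⟩ := Finset.mem_image.1 hg
          refine ⟨T i, hT i, g', ?_, rfl⟩
          rcases Finset.mem_union.1 hg' with hg' | hg'
          · exact h2 _ hg'
          · exact h2' _ hg'
        · intro c hc a ha M hM
          have : ∃ M' ∈ Mset {A, B} (k + 1), phi c (M *ᵥ a) ≤ phi c (T i *ᵥ (M' *ᵥ a)) := by
            obtain ⟨T₁, hT₁, N, hN, rfl⟩ := hM
            rcases hO i T₁ hT₁ with rfl | rfl
            · exact ⟨N, hN, by rw [Matrix.mulVec_mulVec]⟩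
            · obtain ⟨T₂, hT₂, N', hN', rfl⟩ := hN
              obtain ⟨T₃, hT₃, h⟩ := hforce i c hc T₂ hT₂
              refine ⟨T₃ * N', ⟨T₃, hT₃, N', hN', rfl⟩, ?_⟩
              have := h (N' *ᵥ a) (mv_nonneg (Mset_nn hS k _ hN') ha)
              simpa only [Matrix.mulVec_mulVec, Matrix.mul_assoc] using this
          obtain ⟨M', hM', hle⟩ := this
          rw [phi_act c (T i)] at hle
          rcases hact i c hc with hc' | hc'
          · obtain ⟨g, hg, hh⟩ := h3 _ hc' a ha M' hM'
            refine ⟨T i * g, Finset.mem_image_of_mem _ (Finset.mem_union_left _ hg), ?_⟩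
            rw [← Matrix.mulVec_mulVec, phi_act c (T i)]
            exact hle.trans hh
          · obtain ⟨g, hg, hh⟩ := h3' _ hc' a ha M' hM'
            refine ⟨T i * g, Finset.mem_image_of_mem _ (Finset.mem_union_right _ hg), ?_⟩
            rw [← Matrix.mulVec_mulVec, phi_act c (T i)]
            exact hle.trans hh
  intro i
  exact ⟨K + 2, d + 1, fun k => key k i⟩

lemma PG_step1 {A B : M2} (hS : NN {A, B}) (C : Set (ℝ × ℝ))
    (T O : M2) (hTO : (T = A ∧ O = B) ∨ (T = B ∧ O = A))
    (C' : Set (ℝ × ℝ)) (hC' : PG {A, B} C')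
    (hact : ∀ c ∈ C, act c T ∈ C ∪ C')
    (hforce : ∀ c ∈ C, ∀ T₂ ∈ ({A, B} : Set M2), ∃ T₃ ∈ ({A, B} : Set M2),
      ∀ v : Fin 2 → ℝ, 0 ≤ v → phi c (O *ᵥ (T₂ *ᵥ v)) ≤ phi c (T *ᵥ (T₃ *ᵥ v))) :
    PG {A, B} C := by
  refine PG_step hS (fun _ => C) id (fun _ => T) (fun _ => O) ?_ ?_ C' hC'
    (fun _ => hact) (fun _ => hforce) true
  · intro _; rcases hTO with h | h <;> simp [h.1]
  · intro _ T' hT'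
    simp only [Set.mem_insert_iff, Set.mem_singleton_iff] at hT'
    rcases hTO with ⟨h, h'⟩ | ⟨h, h'⟩ <;> rw [h, h'] <;> tauto

def mJ : M2 := !![0, 1; 1, 0]
def mU : M2 := !![1, 1; 0, 1]
def mL : M2 := !![1, 0; 1, 1]
def mF : M2 := !![1, 1; 1, 0]
def mG : M2 := !![0, 1; 1, 1]

def Cp : Set (ℝ × ℝ) := {c | 0 ≤ c.1 ∧ 0 ≤ c.2}
def Cn : Set (ℝ × ℝ) := {c | c.1 ≤ 0 ∧ c.2 ≤ 0}
def Cq : Set (ℝ × ℝ) := {c | 0 ≤ c.1 ∧ c.2 ≤ 0}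
def Cr : Set (ℝ × ℝ) := {c | c.1 ≤ 0 ∧ 0 ≤ c.2}

lemma PG_all {S : Set M2} (h1 : PG S Cp) (h2 : PG S Cn) (h3 : PG S Cq) (h4 : PG S Cr) :
    PG S univ := by
  refine PG_mono ?_ (PG_union (PG_union h1 h2) (PG_union h3 h4))
  intro c _
  simp only [Cp, Cn, Cq, Cr, mem_union, mem_ofPred_eq]
  rcases le_total 0 c.1 with h | h <;> rcases le_total 0 c.2 with h' | h' <;> simp [h, h']

lemma NN_pair {A B : M2} (hA : ∀ i j, 0 ≤ A i j) (hB : ∀ i j, 0 ≤ B i j) : NN {A, B} := by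
  rintro T (rfl | rfl)
  · exact hA
  · exact hB

lemma J_nn : ∀ i j, 0 ≤ mJ i j := by intro i j; fin_cases i <;> fin_cases j <;> simp [mJ]
lemma U_nn : ∀ i j, 0 ≤ mU i j := by intro i j; fin_cases i <;> fin_cases j <;> simp [mU]
lemma L_nn : ∀ i j, 0 ≤ mL i j := by intro i j; fin_cases i <;> fin_cases j <;> simp [mL]
lemma F_nn : ∀ i j, 0 ≤ mF i j := by intro i j; fin_cases i <;> fin_cases j <;> simp [mF]
lemma G_nn : ∀ i j, 0 ≤ mG i j := by intro i j; fin_cases i <;> fin_cases j <;> simp [mG]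

/-- simple forcing from one-step comparison -/
lemma force_simple {A B : M2} (hS : NN {A, B}) {c : ℝ × ℝ} {T O : M2}
    (h : ∀ v : Fin 2 → ℝ, 0 ≤ v 0 → 0 ≤ v 1 → phi c (O *ᵥ v) ≤ phi c (T *ᵥ v)) :
    ∀ T₂ ∈ ({A, B} : Set M2), ∃ T₃ ∈ ({A, B} : Set M2),
      ∀ v : Fin 2 → ℝ, 0 ≤ v → phi c (O *ᵥ (T₂ *ᵥ v)) ≤ phi c (T *ᵥ (T₃ *ᵥ v)) := by
  intro T₂ h₂
  refine ⟨T₂, h₂, fun v hv => ?_⟩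
  have := mv_nonneg (hS T₂ h₂) hv
  exact h _ (this 0) (this 1)

set_option maxHeartbeats 2000000 in
lemma PG_JF : PG {mJ, mF} univ := by
  have hS : NN {mJ, mF} := NN_pair J_nn F_nn
  have hp : PG {mJ, mF} Cp := by
    refine PG_step1 hS Cp mF mJ (Or.inr ⟨rfl, rfl⟩) ∅ (PG_empty _) ?_ ?_
    · rintro ⟨x, y⟩ ⟨hx, hy⟩
      left; simp [act, Cp, mF] at *; constructor <;> linarith
    · rintro ⟨x, y⟩ ⟨hx, hy⟩
      refine force_simple hS fun v h0 h1 => ?_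
      simp [phi, mv0, mv1, mF, mJ] at *; nlinarith
  have hn : PG {mJ, mF} Cn := by
    refine PG_step1 hS Cn mJ mF (Or.inl ⟨rfl, rfl⟩) ∅ (PG_empty _) ?_ ?_
    · rintro ⟨x, y⟩ ⟨hx, hy⟩
      left; simp [act, Cn, mJ] at *; constructor <;> linarith
    · rintro ⟨x, y⟩ ⟨hx, hy⟩
      refine force_simple hS fun v h0 h1 => ?_
      simp [phi, mv0, mv1, mF, mJ] at *; nlinarith
  have hm := PG_step hS (fun i => if i then Cq else Cr) not (fun i => if i then mF else mJ)
    (fun i => if i then mJ else mF) (by intro i; cases i <;> simp)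
    (by intro i T' hT'; cases i <;> simp at * <;> tauto) Cp hp
    (by
      intro i c hc
      obtain ⟨x, y⟩ := c
      cases i
      · left; simp [act, Cq, Cr, mJ] at *; constructor <;> linarith
      · simp [act, Cq, Cr, Cp, mF] at *
        rcases le_total 0 (x + y) with h | h
        · right; constructor <;> linarith
        · left; constructor <;> linarith)
    (by
      intro i c hc
      obtain ⟨x, y⟩ := c
      refine force_simple hS fun v h0 h1 => ?_
      cases i
      · simp [phi, mv0, mv1, mF, mJ, Cr] at *; nlinarith
      · simp [phi, mv0, mv1, mF, mJ, Cq] at *; nlinarith)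
  exact PG_all hp hn (hm true) (hm false)

set_option maxHeartbeats 2000000 in
lemma PG_UF : PG {mU, mF} univ := by
  have hS : NN {mU, mF} := NN_pair U_nn F_nn
  have h12 : ∀ T ∈ ({mU, mF} : Set M2), ∀ v : Fin 2 → ℝ, 0 ≤ v →
      (T *ᵥ v) 1 ≤ (T *ᵥ v) 0 := by
    rintro T (rfl | rfl) v hv
    · have := hv 0; simp [mv0, mv1, mU] at *; linarith
    · have := hv 1; simp [mv0, mv1, mF] at *; linarith
  have fF : ∀ c : ℝ × ℝ, 0 ≤ c.2 → ∀ T₂ ∈ ({mU, mF} : Set M2), ∃ T₃ ∈ ({mU, mF} : Set M2),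
      ∀ v : Fin 2 → ℝ, 0 ≤ v → phi c (mU *ᵥ (T₂ *ᵥ v)) ≤ phi c (mF *ᵥ (T₃ *ᵥ v)) := by
    intro c hc T₂ h₂
    refine ⟨T₂, h₂, fun v hv => ?_⟩
    have := h12 T₂ h₂ v hv
    generalize T₂ *ᵥ v = w at *
    simp [phi, mv0 _ w, mv1 _ w, mF, mU]; nlinarith
  have fU : ∀ c : ℝ × ℝ, c.2 ≤ 0 → ∀ T₂ ∈ ({mU, mF} : Set M2), ∃ T₃ ∈ ({mU, mF} : Set M2),
      ∀ v : Fin 2 → ℝ, 0 ≤ v → phi c (mF *ᵥ (T₂ *ᵥ v)) ≤ phi c (mU *ᵥ (T₃ *ᵥ v)) := by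
    intro c hc T₂ h₂
    refine ⟨T₂, h₂, fun v hv => ?_⟩
    have := h12 T₂ h₂ v hv
    generalize T₂ *ᵥ v = w at *
    simp [phi, mv0 _ w, mv1 _ w, mF, mU]; nlinarith
  have hp : PG {mU, mF} Cp := by
    refine PG_step1 hS Cp mF mU (Or.inr ⟨rfl, rfl⟩) ∅ (PG_empty _) ?_ (fun c hc => fF c hc.2)
    rintro ⟨x, y⟩ ⟨hx, hy⟩
    left; simp [act, Cp, mF] at *; constructor <;> linarith
  have hn : PG {mU, mF} Cn := by
    refine PG_step1 hS Cn mU mF (Or.inl ⟨rfl, rfl⟩) ∅ (PG_empty _) ?_ (fun c hc => fU c hc.2)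
    rintro ⟨x, y⟩ ⟨hx, hy⟩
    left; simp [act, Cn, mU] at *; constructor <;> linarith
  have hq : PG {mU, mF} Cq := by
    refine PG_step1 hS Cq mU mF (Or.inl ⟨rfl, rfl⟩) Cp hp ?_ (fun c hc => fU c hc.2)
    rintro ⟨x, y⟩ ⟨hx, hy⟩
    simp [act, Cp, Cq, mU] at *
    rcases le_total 0 (x + y) with h | h
    · right; constructor <;> linarith
    · left; constructor <;> linarith
  have hr : PG {mU, mF} Cr := by
    refine PG_step1 hS Cr mF mU (Or.inr ⟨rfl, rfl⟩) (Cq ∪ Cn) (PG_union hq hn) ?_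
      (fun c hc => fF c hc.2)
    rintro ⟨x, y⟩ ⟨hx, hy⟩
    right
    simp [act, Cq, Cn, mF] at *
    rcases le_total 0 (x + y) with h | h
    · left; constructor <;> linarith
    · right; constructor <;> linarith
  exact PG_all hp hn hq hr

set_option maxHeartbeats 2000000 in
lemma PG_UG : PG {mU, mG} univ := by
  have hS : NN {mU, mG} := NN_pair U_nn G_nn
  have fU : ∀ c : ℝ × ℝ, c.2 ≤ c.1 → ∀ T₂ ∈ ({mU, mG} : Set M2), ∃ T₃ ∈ ({mU, mG} : Set M2),
      ∀ v : Fin 2 → ℝ, 0 ≤ v → phi c (mG *ᵥ (T₂ *ᵥ v)) ≤ phi c (mU *ᵥ (T₃ *ᵥ v)) := by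
    intro c hc
    refine force_simple hS fun v h0 h1 => ?_
    simp [phi, mv0, mv1, mU, mG]; nlinarith
  have fG : ∀ c : ℝ × ℝ, c.1 ≤ c.2 → ∀ T₂ ∈ ({mU, mG} : Set M2), ∃ T₃ ∈ ({mU, mG} : Set M2),
      ∀ v : Fin 2 → ℝ, 0 ≤ v → phi c (mU *ᵥ (T₂ *ᵥ v)) ≤ phi c (mG *ᵥ (T₃ *ᵥ v)) := by
    intro c hc
    refine force_simple hS fun v h0 h1 => ?_
    simp [phi, mv0, mv1, mU, mG]; nlinarith
  have p1 : PG {mU, mG} {c | 0 ≤ c.1 ∧ c.1 ≤ c.2} := by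
    refine PG_step1 hS _ mG mU (Or.inr ⟨rfl, rfl⟩) ∅ (PG_empty _) ?_ (fun c hc => fG c hc.2)
    rintro ⟨x, y⟩ ⟨hx, hy⟩
    left; simp [act, mG] at *; constructor <;> linarith
  have p2 : PG {mU, mG} {c | 0 ≤ c.2 ∧ c.2 ≤ c.1} := by
    refine PG_step1 hS _ mU mG (Or.inl ⟨rfl, rfl⟩) _ p1 ?_ (fun c hc => fU c hc.2)
    rintro ⟨x, y⟩ ⟨hx, hy⟩
    right; simp [act, mU] at *; constructor <;> linarith
  have n1 : PG {mU, mG} {c | c.1 ≤ 0 ∧ c.2 ≤ c.1} := by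
    refine PG_step1 hS _ mU mG (Or.inl ⟨rfl, rfl⟩) ∅ (PG_empty _) ?_ (fun c hc => fU c hc.2)
    rintro ⟨x, y⟩ ⟨hx, hy⟩
    left; simp [act, mU] at *; constructor <;> linarith
  have n2 : PG {mU, mG} {c | c.2 ≤ 0 ∧ c.1 ≤ c.2} := by
    refine PG_step1 hS _ mG mU (Or.inr ⟨rfl, rfl⟩) _ n1 ?_ (fun c hc => fG c hc.2)
    rintro ⟨x, y⟩ ⟨hx, hy⟩
    right; simp [act, mG] at *; constructor <;> linarith
  have hq : PG {mU, mG} Cq := by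
    refine PG_step1 hS _ mU mG (Or.inl ⟨rfl, rfl⟩) _ p2 ?_ (fun c hc => fU c (hc.2.trans hc.1))
    rintro ⟨x, y⟩ ⟨hx, hy⟩
    simp [act, Cq, mU] at *
    rcases le_total 0 (x + y) with h | h
    · right; constructor <;> linarith
    · left; constructor <;> linarith
  have hr : PG {mU, mG} Cr := by
    refine PG_step1 hS _ mG mU (Or.inr ⟨rfl, rfl⟩) _ (PG_union p2 hq) ?_
      (fun c hc => fG c (hc.1.trans hc.2))
    rintro ⟨x, y⟩ ⟨hx, hy⟩
    right
    simp [act, Cq, mG] at *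
    rcases le_total 0 (x + y) with h | h
    · left; constructor <;> linarith
    · right; constructor <;> linarith
  refine PG_all (PG_mono ?_ (PG_union p1 p2)) (PG_mono ?_ (PG_union n1 n2)) hq hr
  · rintro c ⟨h, h'⟩
    rcases le_total c.1 c.2 with hh | hh
    · left; exact ⟨h, hh⟩
    · right; exact ⟨h', hh⟩
  · rintro c ⟨h, h'⟩
    rcases le_total c.1 c.2 with hh | hh
    · right; exact ⟨h', hh⟩
    · left; exact ⟨h, hh⟩

def Kc : List ℕ → M2
  | [] => 1
  | n :: t => !![(n : ℝ), 1; 1, 0] * Kc t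

lemma Kc_append (l m : List ℕ) : Kc (l ++ m) = Kc l * Kc m := by
  induction l with
  | nil => simp [Kc]
  | cons n t ih => rw [List.cons_append, Kc, ih, Kc, Matrix.mul_assoc]

lemma Kc_one (n : ℕ) : Kc [n] = !![(n : ℝ), 1; 1, 0] := by simp [Kc]

lemma Kc_reverse (l : List ℕ) : Kc l.reverse = (Kc l)ᵀ := by
  induction l with
  | nil => simp [Kc]
  | cons n t ih =>
    rw [List.reverse_cons, Kc_append, ih, Kc_one, Kc, Matrix.transpose_mul]
    congr 1
    ext i j; fin_cases i <;> fin_cases j <;> simp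

lemma Kc_nn (l : List ℕ) : ∀ i j, 0 ≤ Kc l i j := by
  induction l with
  | nil => exact one_nn
  | cons n t ih =>
    refine mul_nn ?_ ih
    intro i j; fin_cases i <;> fin_cases j <;> simp

lemma Kc_unit (l : List ℕ) : IsUnit (Kc l) := by
  induction l with
  | nil => exact isUnit_one
  | cons n t ih =>
    refine IsUnit.mul ?_ ih
    rw [Matrix.isUnit_iff_isUnit_det]
    simp [Matrix.det_fin_two]

lemma Kc_cons_entries (n : ℕ) (t : List ℕ) :
    Kc (n :: t) 0 0 = n * Kc t 0 0 + Kc t 1 0 ∧ Kc (n :: t) 0 1 = n * Kc t 0 1 + Kc t 1 1 ∧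
    Kc (n :: t) 1 0 = Kc t 0 0 ∧ Kc (n :: t) 1 1 = Kc t 0 1 := by
  simp [Kc, Matrix.mul_apply, Fin.sum_univ_two]

lemma Kc_pos_entries (q : List ℕ) (hq : ∀ x ∈ q, 1 ≤ x) (hne : q ≠ []) :
    Kc q 0 1 ≤ Kc q 0 0 ∧ Kc q 1 1 ≤ Kc q 1 0 ∧ 1 ≤ Kc q 1 0 ∧ 1 ≤ Kc q 0 0 := by
  induction q with
  | nil => exact absurd rfl hne
  | cons n t ih =>
    have hn : (1 : ℝ) ≤ n := by exact_mod_cast hq n (by simp)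
    rcases eq_or_ne t [] with rfl | ht
    · simp [Kc]; exact_mod_cast hn
    · obtain ⟨h1, h2, h3, h4⟩ := ih (fun x hx => hq x (by simp [hx])) ht
      obtain ⟨e1, e2, e3, e4⟩ := Kc_cons_entries n t
      rw [e1, e2, e3, e4]
      refine ⟨?_, h1, h4, ?_⟩ <;> nlinarith

/-- entrywise order -/
def mle (M N : M2) : Prop := ∀ i j, M i j ≤ N i j

lemma mle_mul {P X Y Q : M2} (hP : ∀ i j, 0 ≤ P i j) (hQ : ∀ i j, 0 ≤ Q i j) (h : mle X Y) :
    mle (P * X * Q) (P * Y * Q) := by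
  intro i j
  have : 0 ≤ (P * (Y - X) * Q) i j :=
    mul_nn (mul_nn hP (fun i j => by simpa using h i j)) hQ i j
  rw [Matrix.mul_sub, Matrix.sub_mul] at this
  simpa using this

lemma cancel_mul {P X Y Q : M2} (hP : IsUnit P) (hQ : IsUnit Q) (h : P * X * Q = P * Y * Q) :
    X = Y := by
  exact hP.mul_left_cancel (hQ.mul_right_cancel h)

/-- replacing a factor in a list by a larger one contradicts maximality -/
lemma Kc_replace {l₁ m m' l₂ : List ℕ} (h : mle (Kc m) (Kc m')) :
    mle (Kc (l₁ ++ m ++ l₂)) (Kc (l₁ ++ m' ++ l₂)) := by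
  rw [Kc_append, Kc_append, Kc_append (l₁ ++ m'), Kc_append l₁ m']
  exact mle_mul (Kc_nn _) (Kc_nn _) h

lemma Kc_replace_eq {l₁ m m' l₂ : List ℕ} (h : Kc (l₁ ++ m ++ l₂) = Kc (l₁ ++ m' ++ l₂)) :
    Kc m = Kc m' := by
  rw [Kc_append, Kc_append, Kc_append (l₁ ++ m'), Kc_append l₁ m'] at h
  exact cancel_mul (Kc_unit _) (Kc_unit _) h

lemma Kc_exchange (z α β : ℕ) (q : List ℕ) (hz : 1 ≤ z) (hab : α < β) (hq : ∀ x ∈ q, 1 ≤ x) :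
    mle (Kc ([z, α] ++ (β :: (q ++ [α])) ++ [β])) (Kc ([z, α] ++ (β :: (q ++ [α])).reverse ++ [β]))
    ∧ Kc ([z, α] ++ (β :: (q ++ [α])) ++ [β]) ≠ Kc ([z, α] ++ (β :: (q ++ [α])).reverse ++ [β]) := by
  have hgap : (0 : ℝ) < ((β : ℝ) - α) * Kc q 0 0 + Kc q 1 0 - Kc q 0 1 := by
    have hb : (1 : ℝ) ≤ (β : ℝ) - α := by
      have : ((α + 1 : ℕ) : ℝ) ≤ β := by exact_mod_cast hab
      push_cast at this; linarith
    rcases eq_or_ne q [] with rfl | hne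
    · simp [Kc]; linarith
    · obtain ⟨h1, h2, h3, h4⟩ := Kc_pos_entries q hq hne
      nlinarith
  have hm : Kc (β :: (q ++ [α])) 0 1 - Kc (β :: (q ++ [α])) 1 0 =
      ((β : ℝ) - α) * Kc q 0 0 + Kc q 1 0 - Kc q 0 1 := by
    simp [Kc, Kc_append, Matrix.mul_apply, Fin.sum_univ_two]; ring
  rw [← hm] at hgap
  have hz' : (1 : ℝ) ≤ z := by exact_mod_cast hz
  have hab' : (1 : ℝ) ≤ (β : ℝ) - α := by
      have : ((α + 1 : ℕ) : ℝ) ≤ β := by exact_mod_cast hab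
      push_cast at this; linarith
  have hform : ∀ M : M2, Kc [z, α] * Mᵀ * Kc [β] - Kc [z, α] * M * Kc [β] =
      (M 0 1 - M 1 0) • !![(z : ℝ) * (β - α) - 1, (z : ℝ); β - α, 1] := by
    intro M
    have hMT : Mᵀ = !![M 0 0, M 1 0; M 0 1, M 1 1] := by
      ext i j
      fin_cases i <;> fin_cases j <;> simp
    rw [hMT]
    nth_rewrite 5 [Matrix.eta_fin_two M]
    ext i j
    fin_cases i <;> fin_cases j <;>
      simp [Kc] <;> ring
  rw [Kc_append, Kc_append, Kc_append _ [β], Kc_append _ (List.reverse _), Kc_reverse]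
  generalize Kc (β :: (q ++ [α])) = M at *
  have hf := hform M
  have hnn : ∀ i j, 0 ≤ (!![(z : ℝ) * (β - α) - 1, (z : ℝ); β - α, 1] : M2) i j := by
    intro i j
    fin_cases i <;> fin_cases j <;> simp
    · nlinarith
    · linarith
  constructor
  · intro i j
    have e := congrFun (congrFun hf i) j
    rw [Matrix.sub_apply, Matrix.smul_apply, smul_eq_mul] at e
    have := mul_nonneg hgap.le (hnn i j)
    linarith
  · intro h
    rw [h, sub_self] at hf
    have e := congrFun (congrFun hf 1) 1
    simp at e
    linarith

/-- the list of ascents -/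
def ascL : List ℕ → List (ℕ × ℕ)
  | [] => []
  | [_] => []
  | x :: y :: t => if x < y then (x, y) :: ascL (y :: t) else ascL (y :: t)

lemma ascL_mem (l : List ℕ) (x y : ℕ) (h : (x, y) ∈ ascL l) :
    x < y ∧ ∃ p r, l = p ++ x :: y :: r := by
  induction l using ascL.induct with
  | case1 => simp [ascL] at h
  | case2 => simp [ascL] at h
  | case3 u w t hlt ih =>
    rw [ascL, if_pos hlt] at h
    rcases List.mem_cons.1 h with h | h
    · obtain ⟨rfl, rfl⟩ := Prod.mk.inj h
      exact ⟨hlt, [], t, rfl⟩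
    · obtain ⟨h1, p, r, e⟩ := ih h
      exact ⟨h1, u :: p, r, by rw [e]; rfl⟩
  | case4 u w t hlt ih =>
    rw [ascL, if_neg hlt] at h
    obtain ⟨h1, p, r, e⟩ := ih h
    exact ⟨h1, u :: p, r, by rw [e]; rfl⟩

lemma ascL_nodup (l : List ℕ) (h : ¬ (ascL l).Nodup) :
    ∃ α β p q r, α < β ∧ l = p ++ α :: β :: (q ++ α :: β :: r) := by
  induction l using ascL.induct with
  | case1 => simp [ascL] at h
  | case2 => simp [ascL] at h
  | case3 u w t hlt ih =>
    rw [ascL, if_pos hlt, List.nodup_cons] at h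
    by_cases hm : (u, w) ∈ ascL (w :: t)
    · obtain ⟨h1, p, r, e⟩ := ascL_mem _ _ _ hm
      cases p with
      | nil => simp at e; omega
      | cons s p =>
        simp at e
        refine ⟨u, w, [], p, r, hlt, ?_⟩
        rw [e.2]; rfl
    · obtain ⟨α, β, p, q, r, h1, e⟩ := ih (by tauto)
      exact ⟨α, β, u :: p, q, r, h1, by rw [e]; rfl⟩
  | case4 u w t hlt ih =>
    rw [ascL, if_neg hlt] at h
    obtain ⟨α, β, p, q, r, h1, e⟩ := ih h
    exact ⟨α, β, u :: p, q, r, h1, by rw [e]; rfl⟩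

lemma ascL_length (l : List ℕ) (hle : ∀ x ∈ l, x ≤ 4) (h : (ascL l).Nodup) :
    (ascL l).length ≤ 25 := by
  have hsub : (ascL l).toFinset ⊆ Finset.range 5 ×ˢ Finset.range 5 := by
    rintro ⟨x, y⟩ hxy
    obtain ⟨_, p, r, e⟩ := ascL_mem l x y (by simpa using hxy)
    have hx := hle x (by rw [e]; simp)
    have hy := hle y (by rw [e]; simp)
    simp; omega
  have := Finset.card_le_card hsub
  rw [List.toFinset_card_of_nodup h] at this
  simpa using this

lemma ascL_cons (x : ℕ) (l : List ℕ) : (ascL (x :: l)).length ≤ (ascL l).length + 1 := by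
  cases l with
  | nil => simp [ascL]
  | cons y t => rw [ascL]; split_ifs <;> simp

/-- structure of reversal-maximal lists -/
lemma max_struct (ns : List ℕ) (hle : ∀ x ∈ ns, x ≤ 4)
    (hinner : ∀ l₁ x l₂, ns = l₁ ++ x :: l₂ → l₁ ≠ [] → l₂ ≠ [] → 1 ≤ x)
    (hmax : ∀ l₁ m l₂, ns = l₁ ++ m ++ l₂ → mle (Kc ns) (Kc (l₁ ++ m.reverse ++ l₂)) →
      Kc ns = Kc (l₁ ++ m.reverse ++ l₂)) :
    (ascL ns).length ≤ 27 := by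
  match ns, hle, hinner, hmax with
  | [], _, _, _ => simp [ascL]
  | [_], _, _, _ => simp [ascL]
  | x :: y :: l, hle, hinner, hmax =>
    have hnd : (ascL l).Nodup := by
      by_contra hcon
      obtain ⟨α, β, p, q, r, hab, rfl⟩ := ascL_nodup l hcon
      obtain ⟨p', z, hp⟩ : ∃ p' z, y :: p = p' ++ [z] :=
        ⟨(y :: p).dropLast, (y :: p).getLast (by simp), (List.dropLast_append_getLast _).symm⟩
      have e : x :: y :: (p ++ α :: β :: (q ++ α :: β :: r)) =
          (x :: p') ++ z :: (α :: β :: (q ++ α :: β :: r)) := by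
        have : x :: y :: (p ++ α :: β :: (q ++ α :: β :: r)) =
          x :: ((y :: p) ++ α :: β :: (q ++ α :: β :: r)) := rfl
        rw [this, hp]; simp
      have hz : 1 ≤ z := hinner _ _ _ e (by simp) (by simp)
      have hq : ∀ w ∈ q, 1 ≤ w := by
        intro w hw
        obtain ⟨q1, q2, rfl⟩ := List.append_of_mem hw
        refine hinner (x :: p' ++ z :: α :: β :: q1) w (q2 ++ α :: β :: r) ?_ (by simp) (by simp)
        rw [e]; simp
      obtain ⟨h1, h2⟩ := Kc_exchange z α β q hz hab hq
      have e1 : x :: y :: (p ++ α :: β :: (q ++ α :: β :: r)) =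
          (x :: p') ++ ([z, α] ++ (β :: (q ++ [α])) ++ [β]) ++ r := by rw [e]; simp
      have e2 : (x :: p' ++ [z, α]) ++ (β :: (q ++ [α])).reverse ++ (β :: r) =
          (x :: p') ++ ([z, α] ++ (β :: (q ++ [α])).reverse ++ [β]) ++ r := by simp
      have := hmax (x :: p' ++ [z, α]) (β :: (q ++ [α])) (β :: r) (by rw [e]; simp)
      rw [e2, e1] at this
      exact h2 (Kc_replace_eq (this (Kc_replace h1)))
    have h1 := ascL_length l (fun w hw => hle w (by simp [hw])) hnd
    have h2 := ascL_cons x (y :: l)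
    have h3 := ascL_cons y l
    omega

/-- block lists -/
def Bl (n : ℕ) : ℕ → Finset (List ℕ)
  | 0 => {[]}
  | j + 1 => (Finset.range (n + 1) ×ˢ Bl n j).image
      (fun p => List.replicate p.1 (j % 5) ++ p.2)

lemma Bl_card (n j : ℕ) : (Bl n j).card ≤ (n + 1) ^ j := by
  induction j with
  | zero => simp [Bl]
  | succ j ih =>
    rw [Bl]
    refine Finset.card_image_le.trans ?_
    rw [Finset.card_product, Finset.card_range, pow_succ, mul_comm]
    exact Nat.mul_le_mul_right _ ih

lemma Bl_succ {n j : ℕ} {l : List ℕ} : l ∈ Bl n (j + 1) ↔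
    ∃ e ≤ n, ∃ m ∈ Bl n j, l = List.replicate e (j % 5) ++ m := by
  simp only [Bl, Finset.mem_image, Finset.mem_product, Finset.mem_range, Prod.exists]
  constructor
  · rintro ⟨e, m, ⟨h1, h2⟩, rfl⟩; exact ⟨e, by omega, m, h2, rfl⟩
  · rintro ⟨e, h1, m, h2, rfl⟩; exact ⟨e, m, ⟨by omega, h2⟩, rfl⟩

lemma Bl_mono {n j j' : ℕ} (h : j ≤ j') : Bl n j ⊆ Bl n j' := by
  induction h with
  | refl => exact Finset.Subset.refl _
  | step _ ih =>
    intro l hl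
    exact Bl_succ.2 ⟨0, by omega, l, ih hl, by simp⟩

lemma Bl_mem (n : ℕ) (l : List ℕ) (hle : ∀ x ∈ l, x ≤ 4) (hn : l.length ≤ n) :
    ∀ x t, l = x :: t → l ∈ Bl n (5 * (ascL l).length + x + 1) := by
  induction l using ascL.induct with
  | case1 => simp
  | case2 u =>
    rintro x t h
    obtain ⟨rfl, rfl⟩ := List.cons.inj h
    have := hle u (by simp)
    simp at hn
    refine Bl_succ.2 ⟨1, hn, [], Bl_mono (Nat.zero_le _) (by simp [Bl]), ?_⟩
    have e : (5 * (ascL [u]).length + u) % 5 = u := by omega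
    rw [e]; rfl
  | case3 u w t hlt ih =>
    rintro x t' h
    obtain ⟨rfl, rfl⟩ := List.cons.inj h
    have hu := hle u (by simp)
    have hw := hle w (by simp)
    simp only [List.length_cons] at hn
    have := ih (fun z hz => hle z (by simp at hz ⊢; tauto)) (by simp; omega) w t rfl
    refine Bl_succ.2 ⟨1, by omega, w :: t, Bl_mono ?_ this, ?_⟩
    · rw [ascL, if_pos hlt]; simp only [List.length_cons]; omega
    · have e : (5 * (ascL (u :: w :: t)).length + u) % 5 = u := by omega
      rw [e]; rfl
  | case4 u w t hlt ih =>
    rintro x t' h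
    obtain ⟨rfl, rfl⟩ := List.cons.inj h
    have hu := hle u (by simp)
    have hw := hle w (by simp)
    simp only [List.length_cons] at hn
    have := ih (fun z hz => hle z (by simp at hz ⊢; tauto)) (by simp; omega) w t rfl
    have e0 : ascL (u :: w :: t) = ascL (w :: t) := by rw [ascL, if_neg hlt]
    rw [e0]
    have e : (5 * (ascL (w :: t)).length + u) % 5 = u := by omega
    rcases Nat.lt_or_ge w u with hwu | hwu
    · refine Bl_succ.2 ⟨1, by omega, w :: t, Bl_mono ?_ this, ?_⟩
      · omega
      · rw [e]; rfl
    · have : u = w := by omega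
      subst this
      obtain ⟨ee, _, m, hm, em⟩ := Bl_succ.1 this
      refine Bl_succ.2 ⟨ee + 1, ?_, m, hm, ?_⟩
      · have := congrArg List.length em
        simp at this; omega
      · rw [e] at em ⊢
        rw [List.replicate_succ, List.cons_append, ← em]

lemma Bl_mem' (n : ℕ) (l : List ℕ) (hle : ∀ x ∈ l, x ≤ 4) (hn : l.length ≤ n)
    (h : (ascL l).length ≤ 27) : l ∈ Bl n 140 := by
  cases l with
  | nil => exact Bl_mono (Nat.zero_le _) (by simp [Bl])
  | cons x t =>
    have := hle x (by simp)
    exact Bl_mono (by omega) (Bl_mem n _ hle hn x t rfl)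

lemma mJJ : mJ * mJ = 1 := by
  ext i j; fin_cases i <;> fin_cases j <;> simp [mJ]

lemma mJ_pow_two_add (n : ℕ) : mJ ^ (n + 2) = mJ ^ n := by
  rw [pow_add, pow_two, mJJ, mul_one]

lemma mJ_pow_mod (n : ℕ) : mJ ^ n = mJ ^ (n % 2) := by
  conv_lhs => rw [← Nat.mod_add_div n 2]
  rw [pow_add, pow_mul, pow_two, mJJ, one_pow, mul_one]

lemma mJ_unit : IsUnit mJ := IsUnit.of_mul_eq_one _ mJJ

lemma phi_mono {c : ℝ × ℝ} (hc : c ∈ Cp) {M N : M2} (h : mle M N) {a : Fin 2 → ℝ} (ha : 0 ≤ a) :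
    phi c (M *ᵥ a) ≤ phi c (N *ᵥ a) := by
  obtain ⟨h1, h2⟩ := hc
  have h0 := ha 0
  have h1' := ha 1
  simp only [Pi.zero_apply] at h0 h1'
  simp only [phi, mv0, mv1]
  have e00 := mul_le_mul_of_nonneg_right (h 0 0) h0
  have e01 := mul_le_mul_of_nonneg_right (h 0 1) h1'
  have e10 := mul_le_mul_of_nonneg_right (h 1 0) h0
  have e11 := mul_le_mul_of_nonneg_right (h 1 1) h1'
  exact add_le_add (mul_le_mul_of_nonneg_left (add_le_add e00 e01) h1)
    (mul_le_mul_of_nonneg_left (add_le_add e10 e11) h2)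

def esum (M : M2) : ℝ := M 0 0 + M 0 1 + M 1 0 + M 1 1

lemma eq_of_esum {M N : M2} (h : mle M N) (hs : esum N ≤ esum M) : N = M := by
  unfold esum at hs
  have h00 := h 0 0
  have h01 := h 0 1
  have h10 := h 1 0
  have h11 := h 1 1
  ext i j; fin_cases i <;> fin_cases j <;> simp <;> linarith

def IsMx (S : Set M2) (k : ℕ) (g : M2) : Prop :=
  g ∈ Mset S k ∧ ∀ N ∈ Mset S k, mle g N → N = g

lemma exists_mx {S : Set M2} (hS : S.Finite) (k : ℕ) (M : M2) (hM : M ∈ Mset S k) :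
    ∃ g, IsMx S k g ∧ mle M g := by
  have hf : (Mset S k ∩ {N | mle M N}).Finite := (Mset_finite S hS k).inter_of_left _
  obtain ⟨g, ⟨hg1, hg2⟩, hg⟩ := Set.exists_max_image _ esum hf ⟨M, hM, fun _ _ => le_rfl⟩
  refine ⟨g, ⟨hg1, fun N hN hgN => ?_⟩, hg2⟩
  exact eq_of_esum hgN (hg N ⟨hN, fun i j => (hg2 i j).trans (hgN i j)⟩)

lemma PG_pos_of {S : Set M2} (hS : S.Finite) (f : ℕ → List ℕ → M2)
    (h : ∀ k g, IsMx S k g → ∃ ns : List ℕ, g = f k ns ∧ ns.length ≤ k + 2 ∧ (∀ x ∈ ns, x ≤ 4) ∧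
      (∀ l₁ x l₂, ns = l₁ ++ x :: l₂ → l₁ ≠ [] → l₂ ≠ [] → 1 ≤ x) ∧
      (∀ l₁ m l₂, ns = l₁ ++ m ++ l₂ → mle (Kc ns) (Kc (l₁ ++ m.reverse ++ l₂)) →
      Kc ns = Kc (l₁ ++ m.reverse ++ l₂))) : PG S Cp := by
  classical
  refine ⟨3 ^ 140, 140, fun k => ?_⟩
  refine ⟨((Bl (k + 2) 140).image (f k)).filter (fun g => g ∈ Mset S k), ?_, ?_, ?_⟩
  · refine (Finset.card_filter_le _ _).trans (Finset.card_image_le.trans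
      ((Bl_card _ _).trans ?_))
    rw [← Nat.mul_pow]
    exact Nat.pow_le_pow_left (by omega) _
  · intro g hg
    exact (Finset.mem_filter.1 hg).2
  · intro c hc a ha M hM
    obtain ⟨g, hg, hMg⟩ := exists_mx hS k M hM
    refine ⟨g, ?_, phi_mono hc hMg ha⟩
    obtain ⟨ns, rfl, h1, h2, h3, h4⟩ := h k g hg
    exact Finset.mem_filter.2 ⟨Finset.mem_image_of_mem _
      (Bl_mem' _ _ h2 h1 (max_struct ns h2 h3 h4)), hg.1⟩

lemma mL_eq : mL = Kc [0, 1] := by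
  ext i j; fin_cases i <;> fin_cases j <;> simp [mL, Kc]

lemma mU_eq : mU = Kc [1, 0] := by
  ext i j; fin_cases i <;> fin_cases j <;> simp [mU, Kc]

lemma JUJ : mJ * mU * mJ = mL := by
  ext i j; fin_cases i <;> fin_cases j <;> simp [mL, mU, mJ]

lemma JLJ : mJ * mL * mJ = mU := by
  ext i j; fin_cases i <;> fin_cases j <;> simp [mL, mU, mJ]

lemma JFJ : mJ * mF * mJ = mG := by
  ext i j; fin_cases i <;> fin_cases j <;> simp [mG, mF, mJ]

lemma JGJ : mJ * mG * mJ = mF := by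
  ext i j; fin_cases i <;> fin_cases j <;> simp [mG, mF, mJ]

lemma Kc_cons_eq (n : ℕ) (t : List ℕ) : Kc (n :: t) = mU ^ n * mJ * Kc t := by
  induction n with
  | zero =>
    rw [pow_zero, one_mul, Kc]; congr 1; simp [mJ]
  | succ n ih =>
    have : mU ^ (n + 1) * mJ * Kc t = mU * (mU ^ n * mJ * Kc t) := by
      rw [pow_succ']; simp only [mul_assoc]
    rw [this, ← ih, Kc, Kc, ← mul_assoc]
    congr 1
    ext i j; fin_cases i <;> fin_cases j <;> simp [mU]

/-- conjugation by `J` -/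
lemma Mset_conj {A B A' B' : M2} (hA : mJ * A * mJ = A') (hB : mJ * B * mJ = B') (k : ℕ) :
    ∀ M ∈ Mset {A, B} k, mJ * M * mJ ∈ Mset {A', B'} k := by
  induction k with
  | zero => rintro M rfl; simp [Mset, mJJ]
  | succ k ih =>
    rintro M ⟨T, hT, N, hN, rfl⟩
    refine ⟨mJ * T * mJ, ?_, mJ * N * mJ, ih N hN, ?_⟩
    · rcases hT with rfl | rfl
      · left; exact hA
      · right; exact hB
    · calc mJ * (T * N) * mJ = mJ * T * 1 * N * mJ := by simp only [mul_assoc, one_mul]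
        _ = _ := by rw [← mJJ]; simp only [mul_assoc]

lemma Mset_UL_conj (k : ℕ) : ∀ M ∈ Mset {mU, mL} k, mJ * M * mJ ∈ Mset {mU, mL} k := by
  intro M hM
  have := Mset_conj JUJ JLJ k M hM
  rwa [Set.pair_comm] at this

lemma Mset_pow_mul {S : Set M2} {T : M2} (hT : T ∈ S) (n k : ℕ) (M : M2) (hM : M ∈ Mset S k) :
    T ^ n * M ∈ Mset S (n + k) := by
  induction n with
  | zero => simpa using hM
  | succ n ih =>
    rw [Nat.succ_add, pow_succ', mul_assoc]
    exact ⟨T, hT, _, ih, rfl⟩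

lemma UL_rep1 (k : ℕ) : ∀ M ∈ Mset {mU, mL} k,
    ∃ ns : List ℕ, ns.sum = k ∧ M = Kc ns * mJ ^ ns.length := by
  induction k with
  | zero => rintro M rfl; exact ⟨[], rfl, by simp [Kc]⟩
  | succ k ih =>
    rintro M ⟨T, hT, N, hN, rfl⟩
    obtain ⟨ns, h1, rfl⟩ := ih N hN
    rcases hT with rfl | rfl
    · refine ⟨1 :: 0 :: ns, by simp; omega, ?_⟩
      have : Kc (1 :: 0 :: ns) = Kc [1, 0] * Kc ns := by rw [← Kc_append]; rfl
      rw [this, ← mU_eq, List.length_cons, List.length_cons, mJ_pow_two_add, mul_assoc]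
    · refine ⟨0 :: 1 :: ns, by simp; omega, ?_⟩
      have : Kc (0 :: 1 :: ns) = Kc [0, 1] * Kc ns := by rw [← Kc_append]; rfl
      rw [this, ← mL_eq, List.length_cons, List.length_cons, mJ_pow_two_add, mul_assoc]

lemma UL_rep2 (ns : List ℕ) : Kc ns * mJ ^ ns.length ∈ Mset {mU, mL} ns.sum := by
  induction ns with
  | nil => simp [Kc, Mset]
  | cons n t ih =>
    have := Mset_pow_mul (show mU ∈ ({mU, mL} : Set M2) by simp) n _ _ (Mset_UL_conj _ _ ih)
    rw [List.sum_cons]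
    convert this using 1
    rw [Kc_cons_eq, List.length_cons, pow_succ]
    simp only [mul_assoc]

lemma len_le (ns : List ℕ)
    (hinner : ∀ l₁ x l₂, ns = l₁ ++ x :: l₂ → l₁ ≠ [] → l₂ ≠ [] → 1 ≤ x) :
    ns.length ≤ ns.sum + 2 := by
  cases ns with
  | nil => simp
  | cons x t =>
    rcases eq_or_ne t [] with rfl | ht
    · simp
    · obtain ⟨m, y, rfl⟩ : ∃ m y, t = m ++ [y] :=
        ⟨t.dropLast, t.getLast ht, (List.dropLast_append_getLast ht).symm⟩
      have : m.length ≤ m.sum := by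
        apply List.length_le_sum_of_one_le
        intro w hw
        obtain ⟨q1, q2, rfl⟩ := List.append_of_mem hw
        exact hinner (x :: q1) w (q2 ++ [y]) (by simp) (by simp) (by simp)
      simp; omega

lemma sum_rev (l₁ m l₂ : List ℕ) : (l₁ ++ m.reverse ++ l₂).sum = (l₁ ++ m ++ l₂).sum := by
  simp [List.sum_reverse]

lemma finpair (A B : M2) : ({A, B} : Set M2).Finite := by simp

lemma PG_UL_pos : PG {mU, mL} Cp := by
  refine PG_pos_of (finpair _ _) (fun _ ns => Kc ns * mJ ^ ns.length) ?_
  intro k g hg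
  classical
  have hex : ∃ n, ∃ ns : List ℕ, ns.length = n ∧ ns.sum = k ∧ g = Kc ns * mJ ^ ns.length := by
    obtain ⟨ns, h1, h2⟩ := UL_rep1 k g hg.1
    exact ⟨_, ns, rfl, h1, h2⟩
  obtain ⟨ns, hlen, hsum, hgns⟩ := Nat.find_spec hex
  have hmin : ∀ ns' : List ℕ, ns'.sum = k → g = Kc ns' * mJ ^ ns'.length →
      ns.length ≤ ns'.length := by
    intro ns' h1 h2
    rw [hlen]; exact Nat.find_min' hex ⟨ns', rfl, h1, h2⟩
  have hdom : ∀ ns' : List ℕ, ns'.sum = k → ns'.length % 2 = ns.length % 2 →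
      mle (Kc ns) (Kc ns') → Kc ns = Kc ns' := by
    intro ns' h1 h2 h3
    have hJ : mJ ^ ns'.length = mJ ^ ns.length := by
      rw [mJ_pow_mod, h2, ← mJ_pow_mod]
    have hmem := UL_rep2 ns'
    rw [h1, hJ] at hmem
    have hle : mle g (Kc ns' * mJ ^ ns.length) := by
      rw [hgns]
      have := mle_mul (P := 1) (Q := mJ ^ ns.length) one_nn ?_ h3
      · simpa using this
      · have := Mset_nn (NN_pair J_nn J_nn) ns.length (mJ ^ ns.length * 1)
          (by simpa using Mset_pow_mul (S := {mJ, mJ}) (T := mJ) (by simp) ns.length 0 1 rfl)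
        simpa using this
    have := hg.2 _ hmem hle
    rw [hgns] at this
    exact ((mJ_unit.pow _).mul_right_cancel this).symm
  have hinner : ∀ l₁ x l₂, ns = l₁ ++ x :: l₂ → l₁ ≠ [] → l₂ ≠ [] → 1 ≤ x := by
    intro l₁ x l₂ e n1 n2
    by_contra hx
    have hx0 : x = 0 := by omega
    subst hx0
    obtain ⟨m, y, rfl⟩ : ∃ m y, l₁ = m ++ [y] :=
        ⟨l₁.dropLast, l₁.getLast n1, (List.dropLast_append_getLast n1).symm⟩
    obtain ⟨z, r, rfl⟩ := List.exists_cons_of_ne_nil n2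
    have hK : Kc [y, 0, z] = Kc [y + z] := by
      ext i j; fin_cases i <;> fin_cases j <;> simp [Kc]
    have e1 : ns = m ++ [y, 0, z] ++ r := by rw [e]; simp
    have hK2 : Kc ns = Kc (m ++ [y + z] ++ r) := by
      rw [e1]; simp only [Kc_append, hK]
    have hl : ns.length = (m ++ [y + z] ++ r).length + 2 := by rw [e1]; simp; omega
    have := hmin (m ++ [y + z] ++ r) (by rw [← hsum, e1]; simp; omega) (by
      rw [hgns, hK2, hl, mJ_pow_two_add])
    omega
  refine ⟨ns, hgns, ?_, ?_, hinner, ?_⟩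
  · rw [← hsum]; exact len_le ns hinner
  · intro x hx
    by_contra hx4
    obtain ⟨l₁, l₂, e⟩ := List.append_of_mem hx
    obtain ⟨y, rfl⟩ : ∃ y, x = y + 3 := ⟨x - 3, by omega⟩
    have e1 : ns = l₁ ++ [y + 3] ++ l₂ := by rw [e]; simp
    have hK : mle (Kc [y + 3]) (Kc [1, 1, y + 1]) := by
      intro i j
      have : (0 : ℝ) ≤ y := by positivity
      fin_cases i <;> fin_cases j <;> simp [Kc] <;> linarith
    have := hdom (l₁ ++ [1, 1, y + 1] ++ l₂) (by rw [← hsum, e1]; simp; omega)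
      (by rw [e1]; simp; omega) (by rw [e1]; exact Kc_replace hK)
    rw [e1] at this
    have := congrFun (congrFun (Kc_replace_eq this) 0) 1
    norm_num [Kc] at this
  · intro l₁ m l₂ e h
    refine hdom _ ?_ ?_ h
    · rw [sum_rev, ← e, hsum]
    · rw [e]; simp

lemma JU_rep1 (k : ℕ) : ∀ M ∈ Mset {mJ, mU} k,
    ∃ ns : List ℕ, ns ≠ [] ∧ ns.sum + ns.length = k + 1 ∧ M = Kc ns * mJ := by
  induction k with
  | zero =>
    rintro M rfl
    refine ⟨[0], by simp, rfl, ?_⟩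
    rw [Kc_cons_eq]; simp [Kc, mJJ]
  | succ k ih =>
    rintro M ⟨T, hT, N, hN, rfl⟩
    obtain ⟨ns, h0, h1, rfl⟩ := ih N hN
    rcases hT with rfl | rfl
    · refine ⟨0 :: ns, by simp, by simp; omega, ?_⟩
      rw [Kc_cons_eq]; simp only [pow_zero, one_mul, mul_assoc]
    · obtain ⟨n, t, rfl⟩ := List.exists_cons_of_ne_nil h0
      refine ⟨(n + 1) :: t, by simp, by simp at *; omega, ?_⟩
      rw [Kc_cons_eq, Kc_cons_eq, pow_succ']; simp only [mul_assoc]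

lemma JU_rep2 (ns : List ℕ) (h : ns ≠ []) :
    Kc ns * mJ ∈ Mset {mJ, mU} (ns.sum + ns.length - 1) := by
  induction ns with
  | nil => exact absurd rfl h
  | cons n t ih =>
    have hU : mU ∈ ({mJ, mU} : Set M2) := by simp
    rcases eq_or_ne t [] with rfl | ht
    · have := Mset_pow_mul hU n 0 1 rfl
      have e : ([n] : List ℕ).sum + [n].length - 1 = n + 0 := by simp
      rw [e]; convert this using 1
      rw [Kc_cons_eq]; simp [Kc, mul_assoc, mJJ]
    · have h1 : mJ * (Kc t * mJ) ∈ Mset {mJ, mU} (t.sum + t.length - 1 + 1) :=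
        ⟨mJ, by simp, _, ih ht, rfl⟩
      have h2 := Mset_pow_mul hU n _ _ h1
      have := List.length_pos_iff.2 ht
      have e : (n :: t).sum + (n :: t).length - 1 = n + (t.sum + t.length - 1 + 1) := by
        simp; omega
      rw [e]
      convert h2 using 1
      rw [Kc_cons_eq]; simp only [mul_assoc]

lemma PG_JU_pos : PG {mJ, mU} Cp := by
  refine PG_pos_of (finpair _ _) (fun _ ns => Kc ns * mJ) ?_
  intro k g hg
  obtain ⟨ns, hne, hsum, hgns⟩ := JU_rep1 k g hg.1
  have hdom : ∀ ns' : List ℕ, ns' ≠ [] → ns'.sum + ns'.length = k + 1 →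
      mle (Kc ns) (Kc ns') → Kc ns = Kc ns' := by
    intro ns' h0 h1 h3
    have hmem := JU_rep2 ns' h0
    rw [h1, Nat.add_sub_cancel] at hmem
    have hle : mle g (Kc ns' * mJ) := by
      rw [hgns]
      have := mle_mul (P := 1) (Q := mJ) one_nn J_nn h3
      simpa using this
    have := hg.2 _ hmem hle
    rw [hgns] at this
    exact (mJ_unit.mul_right_cancel this).symm
  have hinner : ∀ l₁ x l₂, ns = l₁ ++ x :: l₂ → l₁ ≠ [] → l₂ ≠ [] → 1 ≤ x := by
    intro l₁ x l₂ e n1 n2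
    by_contra hx
    have hx0 : x = 0 := by omega
    subst hx0
    obtain ⟨m, y, rfl⟩ : ∃ m y, l₁ = m ++ [y] :=
        ⟨l₁.dropLast, l₁.getLast n1, (List.dropLast_append_getLast n1).symm⟩
    obtain ⟨z, r, rfl⟩ := List.exists_cons_of_ne_nil n2
    have hK : mle (Kc [y, 0, z]) (Kc [y + z + 2]) := by
      intro i j; fin_cases i <;> fin_cases j <;> simp [Kc]
    have e1 : ns = m ++ [y, 0, z] ++ r := by rw [e]; simp
    have := hdom (m ++ [y + z + 2] ++ r) (by simp) (by rw [← hsum, e1]; simp; omega)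
      (by rw [e1]; exact Kc_replace hK)
    rw [e1] at this
    have := congrFun (congrFun (Kc_replace_eq this) 0) 0
    simp [Kc] at this
  refine ⟨ns, hgns, by omega, ?_, hinner, ?_⟩
  · intro x hx
    by_contra hx4
    obtain ⟨l₁, l₂, e⟩ := List.append_of_mem hx
    obtain ⟨y, rfl⟩ : ∃ y, x = y + 5 := ⟨x - 5, by omega⟩
    have e1 : ns = l₁ ++ [y + 5] ++ l₂ := by rw [e]; simp
    have hK : mle (Kc [y + 5]) (Kc [2, y + 2]) := by
      intro i j
      have : (0 : ℝ) ≤ y := by positivity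
      fin_cases i <;> fin_cases j <;> simp [Kc] <;> linarith
    have := hdom (l₁ ++ [2, y + 2] ++ l₂) (by simp) (by rw [← hsum, e1]; simp; omega)
      (by rw [e1]; exact Kc_replace hK)
    rw [e1] at this
    have := congrFun (congrFun (Kc_replace_eq this) 1) 1
    norm_num [Kc] at this
  · intro l₁ m l₂ e h
    refine hdom _ ?_ ?_ h
    · intro h0
      apply hne
      have := congrArg List.length h0
      apply List.eq_nil_of_length_eq_zero
      rw [e]; simpa using this
    · rw [sum_rev, ← e]
      have : (l₁ ++ m.reverse ++ l₂).length = ns.length := by rw [e]; simp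
      rw [this, hsum]

lemma mU_pow (k : ℕ) : mU ^ k = !![1, (k : ℝ); 0, 1] := by
  induction k with
  | zero => ext i j; fin_cases i <;> fin_cases j <;> simp
  | succ k ih =>
    rw [pow_succ, ih]
    ext i j; fin_cases i <;> fin_cases j <;> simp [mU]
    ring

lemma mL_pow (k : ℕ) : mL ^ k = !![1, 0; (k : ℝ), 1] := by
  induction k with
  | zero => ext i j; fin_cases i <;> fin_cases j <;> simp
  | succ k ih =>
    rw [pow_succ, ih]
    ext i j; fin_cases i <;> fin_cases j <;> simp [mL]

lemma pow_mem_Mset {S : Set M2} {T : M2} (hT : T ∈ S) (k : ℕ) : T ^ k ∈ Mset S k := by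
  simpa using Mset_pow_mul hT k 0 1 rfl

lemma UL_low (k : ℕ) : ∀ M ∈ Mset {mU, mL} k,
    1 ≤ M 0 0 ∧ 1 ≤ M 1 1 ∧ 0 ≤ M 0 1 ∧ 0 ≤ M 1 0 ∧ (k : ℝ) ≤ M 0 1 + M 1 0 := by
  induction k with
  | zero => rintro M rfl; simp
  | succ k ih =>
    rintro M ⟨T, (rfl | rfl), N, hN, rfl⟩
    · obtain ⟨h1, h2, h3, h4, h5⟩ := ih N hN
      simp [Matrix.mul_apply, Fin.sum_univ_two, mU]
      refine ⟨?_, ?_, ?_, ?_, ?_⟩ <;> linarith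
    · obtain ⟨h1, h2, h3, h4, h5⟩ := ih N hN
      simp [Matrix.mul_apply, Fin.sum_univ_two, mL]
      refine ⟨?_, ?_, ?_, ?_, ?_⟩ <;> linarith

lemma PG_UL_neg : PG {mU, mL} Cn := by
  classical
  refine ⟨2, 0, fun k => ⟨{mU ^ k, mL ^ k}, by simpa using Finset.card_le_two, ?_, ?_⟩⟩
  · intro g hg
    simp only [Finset.mem_insert, Finset.mem_singleton] at hg
    rcases hg with rfl | rfl
    · exact pow_mem_Mset (by simp) k
    · exact pow_mem_Mset (by simp) k
  · rintro ⟨x, y⟩ ⟨hx, hy⟩ a ha M hM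
    obtain ⟨h1, h2, h3, h4, h5⟩ := UL_low k M hM
    have a0 := ha 0
    have a1 := ha 1
    simp only [Pi.zero_apply] at a0 a1 hx hy
    have p0 : x * a 1 ≤ 0 := mul_nonpos_of_nonpos_of_nonneg hx a1
    have q0 : y * a 0 ≤ 0 := mul_nonpos_of_nonpos_of_nonneg hy a0
    have p1 : x * a 0 ≤ 0 := mul_nonpos_of_nonpos_of_nonneg hx a0
    have q1 : y * a 1 ≤ 0 := mul_nonpos_of_nonpos_of_nonneg hy a1
    have e1 : x * a 0 * (M 0 0 - 1) ≤ 0 := mul_nonpos_of_nonpos_of_nonneg p1 (by linarith)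
    have e2 : y * a 1 * (M 1 1 - 1) ≤ 0 := mul_nonpos_of_nonpos_of_nonneg q1 (by linarith)
    rcases le_total (x * a 1) (y * a 0) with h | h
    · refine ⟨mL ^ k, by simp, ?_⟩
      rw [mL_pow]
      have e3 : (x * a 1 - y * a 0) * M 0 1 ≤ 0 := mul_nonpos_of_nonpos_of_nonneg (by linarith) h3
      have e4 : y * a 0 * (M 0 1 + M 1 0 - k) ≤ 0 :=
        mul_nonpos_of_nonpos_of_nonneg q0 (by linarith)
      simp only [phi, mv0, mv1]
      simp
      linarith
    · refine ⟨mU ^ k, by simp, ?_⟩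
      rw [mU_pow]
      have e3 : (y * a 0 - x * a 1) * M 1 0 ≤ 0 := mul_nonpos_of_nonpos_of_nonneg (by linarith) h4
      have e4 : x * a 1 * (M 0 1 + M 1 0 - k) ≤ 0 :=
        mul_nonpos_of_nonpos_of_nonneg p0 (by linarith)
      simp only [phi, mv0, mv1]
      simp
      linarith

lemma PG_UL : PG {mU, mL} univ := by
  have hS : NN {mU, mL} := NN_pair U_nn L_nn
  refine PG_all PG_UL_pos PG_UL_neg ?_ ?_
  · refine PG_step1 hS Cq mU mL (Or.inl ⟨rfl, rfl⟩) Cp PG_UL_pos ?_ ?_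
    · rintro ⟨x, y⟩ ⟨hx, hy⟩
      simp [act, Cp, Cq, mU] at *
      rcases le_total 0 (x + y) with h | h
      · right; constructor <;> linarith
      · left; constructor <;> linarith
    · rintro ⟨x, y⟩ ⟨hx, hy⟩
      refine force_simple hS fun v h0 h1 => ?_
      simp only at hx hy
      have e1 := mul_nonneg hx h1
      have e2 := mul_nonpos_of_nonpos_of_nonneg hy h0
      simp [phi, mv0, mv1, mU, mL]; linarith
  · refine PG_step1 hS Cr mL mU (Or.inr ⟨rfl, rfl⟩) Cp PG_UL_pos ?_ ?_
    · rintro ⟨x, y⟩ ⟨hx, hy⟩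
      simp [act, Cp, Cr, mL] at *
      rcases le_total 0 (x + y) with h | h
      · right; constructor <;> linarith
      · left; constructor <;> linarith
    · rintro ⟨x, y⟩ ⟨hx, hy⟩
      refine force_simple hS fun v h0 h1 => ?_
      simp only at hx hy
      have e1 := mul_nonneg hy h0
      have e2 := mul_nonpos_of_nonpos_of_nonneg hx h1
      simp [phi, mv0, mv1, mU, mL]; linarith

lemma JU_low (k : ℕ) : ∀ M ∈ Mset {mJ, mU} k, ∃ g ∈ Mset {mJ, mU} k, mle g M ∧
    ((k % 2 = 0 ∧ (g = 1 ∨ g = mF ∨ g = mG)) ∨ (k % 2 = 1 ∧ (g = mJ ∨ g = mU ∨ g = mL))) := by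
  induction k with
  | zero => rintro M rfl; exact ⟨1, rfl, fun i j => le_rfl, by simp⟩
  | succ k ih =>
    rintro M ⟨T, hT, N, hN, rfl⟩
    obtain ⟨g, hg, hgN, hc⟩ := ih N hN
    have hT0 : ∀ i j, 0 ≤ T i j := NN_pair J_nn U_nn T hT
    have hle : mle (T * g) (T * N) := by
      intro i j
      rw [Matrix.mul_apply, Matrix.mul_apply]
      exact Finset.sum_le_sum fun l _ => mul_le_mul_of_nonneg_left (hgN l j) (hT0 i l)
    have hmem : T * g ∈ Mset {mJ, mU} (k + 1) := ⟨T, hT, g, hg, rfl⟩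
    have hJ : mJ ^ ((k + 1) % 2) ∈ Mset {mJ, mU} (k + 1) := by
      rw [← mJ_pow_mod]; exact pow_mem_Mset (by simp) _
    have tr : ∀ g' : M2, mle g' (T * g) → mle g' (T * N) := fun g' h i j => (h i j).trans (hle i j)
    rcases hT with rfl | rfl
    · refine ⟨_, hmem, hle, ?_⟩
      rcases hc with ⟨h2, rfl | rfl | rfl⟩ | ⟨h2, rfl | rfl | rfl⟩
      · right; refine ⟨by omega, Or.inl (by simp)⟩
      · right; refine ⟨by omega, Or.inr (Or.inr ?_)⟩
        ext i j; fin_cases i <;> fin_cases j <;> simp [mJ, mF, mL]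
      · right; refine ⟨by omega, Or.inr (Or.inl ?_)⟩
        ext i j; fin_cases i <;> fin_cases j <;> simp [mJ, mG, mU]
      · left; exact ⟨by omega, Or.inl mJJ⟩
      · left; refine ⟨by omega, Or.inr (Or.inr ?_)⟩
        ext i j; fin_cases i <;> fin_cases j <;> simp [mJ, mG, mU]
      · left; refine ⟨by omega, Or.inr (Or.inl ?_)⟩
        ext i j; fin_cases i <;> fin_cases j <;> simp [mJ, mF, mL]
    · rcases hc with ⟨h2, h⟩ | ⟨h2, h⟩
      · have e : (k + 1) % 2 = 1 := by omega
        rw [e, pow_one] at hJ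
        rcases h with rfl | rfl | rfl
        · exact ⟨_, hmem, hle, Or.inr ⟨e, Or.inr (Or.inl (by simp))⟩⟩
        · refine ⟨mJ, hJ, tr _ ?_, Or.inr ⟨e, Or.inl rfl⟩⟩
          intro i j; fin_cases i <;> fin_cases j <;> simp [mJ, mF, mU]
        · refine ⟨mJ, hJ, tr _ ?_, Or.inr ⟨e, Or.inl rfl⟩⟩
          intro i j; fin_cases i <;> fin_cases j <;> simp [mJ, mG, mU]
      · have e : (k + 1) % 2 = 0 := by omega
        rw [e, pow_zero] at hJ
        rcases h with rfl | rfl | rfl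
        · refine ⟨_, hmem, hle, Or.inl ⟨e, Or.inr (Or.inl ?_)⟩⟩
          ext i j; fin_cases i <;> fin_cases j <;> simp [mJ, mF, mU]
        · refine ⟨1, hJ, tr _ ?_, Or.inl ⟨e, Or.inl rfl⟩⟩
          intro i j; fin_cases i <;> fin_cases j <;> simp [mU]
        · refine ⟨1, hJ, tr _ ?_, Or.inl ⟨e, Or.inl rfl⟩⟩
          intro i j; fin_cases i <;> fin_cases j <;> simp [mL, mU]

lemma PG_JU_neg : PG {mJ, mU} Cn := by
  classical
  refine ⟨6, 0, fun k => ⟨({1, mJ, mU, mL, mF, mG} : Finset M2).filter (· ∈ Mset {mJ, mU} k),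
    ?_, ?_, ?_⟩⟩
  · refine (Finset.card_filter_le _ _).trans ?_
    simpa using Finset.card_le_six
  · intro g hg; exact (Finset.mem_filter.1 hg).2
  · rintro ⟨x, y⟩ ⟨hx, hy⟩ a ha M hM
    obtain ⟨g, hg, hle, h⟩ := JU_low k M hM
    refine ⟨g, Finset.mem_filter.2 ⟨by simp; tauto, hg⟩, ?_⟩
    have := phi_mono (c := (-x, -y)) ⟨by simpa using hx, by simpa using hy⟩ hle ha
    simp only [phi] at *
    linarith

lemma PG_JU : PG {mJ, mU} univ := by
  have hS : NN {mJ, mU} := NN_pair J_nn U_nn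
  have hq : PG {mJ, mU} Cq := by
    refine PG_step1 hS Cq mU mJ (Or.inr ⟨rfl, rfl⟩) Cp PG_JU_pos ?_ ?_
    · rintro ⟨x, y⟩ ⟨hx, hy⟩
      simp [act, Cp, Cq, mU] at *
      rcases le_total 0 (x + y) with h | h
      · right; constructor <;> linarith
      · left; constructor <;> linarith
    · rintro ⟨x, y⟩ ⟨hx, hy⟩ T₂ h₂
      refine ⟨mU, by simp, fun v hv => ?_⟩
      have h0 := hv 0
      have h1 := hv 1
      simp only [Pi.zero_apply] at hx hy h0 h1
      have e1 := mul_nonneg hx h1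
      have e2 := mul_nonneg hx h0
      have e3 := mul_nonpos_of_nonpos_of_nonneg hy h0
      rcases h₂ with rfl | rfl <;> simp only [phi, mv0, mv1] <;> simp [mU, mJ] <;> linarith
  refine PG_all PG_JU_pos PG_JU_neg hq ?_
  refine PG_step1 hS Cr mJ mU (Or.inl ⟨rfl, rfl⟩) Cq hq ?_ ?_
  · rintro ⟨x, y⟩ ⟨hx, hy⟩
    right
    simp [act, Cr, Cq, mJ] at *
    exact ⟨hy, hx⟩
  · rintro ⟨x, y⟩ ⟨hx, hy⟩ T₂ h₂
    refine ⟨mU, by simp, fun v hv => ?_⟩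
    have h0 := hv 0
    have h1 := hv 1
    simp only [Pi.zero_apply] at hx hy h0 h1
    have e1 := mul_nonneg hy h1
    have e2 := mul_nonneg hy h0
    have e3 := mul_nonpos_of_nonpos_of_nonneg hx h0
    have e4 := mul_nonpos_of_nonpos_of_nonneg hx h1
    rcases h₂ with rfl | rfl <;> simp only [phi, mv0, mv1] <;> simp [mU, mJ] <;> linarith

lemma UJ_eq : mU * mJ = mF := by
  ext i j; fin_cases i <;> fin_cases j <;> simp [mJ, mF, mU]

lemma LJ_eq : mL * mJ = mG := by
  ext i j; fin_cases i <;> fin_cases j <;> simp [mJ, mG, mL]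

lemma FG_to_UL (k : ℕ) : ∀ M ∈ Mset {mF, mG} k, M * mJ ^ k ∈ Mset {mU, mL} k := by
  induction k with
  | zero => rintro M rfl; simp [Mset]
  | succ k ih =>
    rintro M ⟨T, hT, N, hN, rfl⟩
    have h := Mset_UL_conj k _ (ih N hN)
    rcases hT with rfl | rfl
    · refine ⟨mU, by simp, _, h, ?_⟩
      rw [← UJ_eq, pow_succ]; simp only [mul_assoc]
    · refine ⟨mL, by simp, _, h, ?_⟩
      rw [← LJ_eq, pow_succ]; simp only [mul_assoc]

lemma UL_to_FG (k : ℕ) : ∀ M ∈ Mset {mU, mL} k, M * mJ ^ k ∈ Mset {mF, mG} k := by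
  induction k with
  | zero => rintro M rfl; simp [Mset]
  | succ k ih =>
    rintro M ⟨T, hT, N, hN, rfl⟩
    have h := ih _ (Mset_UL_conj k _ hN)
    have hJ : ∀ X : M2, mJ * (mJ * X) = X := fun X => by rw [← mul_assoc, mJJ, one_mul]
    rcases hT with rfl | rfl
    · refine ⟨mF, by simp, _, h, ?_⟩
      rw [← UJ_eq, pow_succ']; simp only [mul_assoc, hJ]
    · refine ⟨mG, by simp, _, h, ?_⟩
      rw [← LJ_eq, pow_succ']; simp only [mul_assoc, hJ]

lemma Jpow_sq (k : ℕ) : mJ ^ k * mJ ^ k = 1 := by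
  rw [← pow_add, ← two_mul, pow_mul, pow_two, mJJ, one_pow]

lemma J_mv_nonneg {a : Fin 2 → ℝ} (ha : 0 ≤ a) (k : ℕ) : 0 ≤ (mJ ^ k) *ᵥ a := by
  refine mv_nonneg (Mset_nn (S := {mJ, mJ}) (NN_pair J_nn J_nn) k _ (pow_mem_Mset (by simp) k)) ha

lemma PG_FG : PG {mF, mG} univ := by
  classical
  obtain ⟨K, d, H⟩ := PG_UL
  refine ⟨K, d, fun k => ?_⟩
  obtain ⟨G, h1, h2, h3⟩ := H k
  refine ⟨G.image (· * mJ ^ k), Finset.card_image_le.trans h1, ?_, ?_⟩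
  · intro g hg
    obtain ⟨g', hg', rfl⟩ := Finset.mem_image.1 hg
    exact UL_to_FG k _ (h2 _ hg')
  · intro c _ a ha M hM
    obtain ⟨g, hg, hh⟩ := h3 c trivial _ (J_mv_nonneg ha k) _ (FG_to_UL k M hM)
    refine ⟨g * mJ ^ k, Finset.mem_image_of_mem _ hg, ?_⟩
    rwa [Matrix.mulVec_mulVec, mul_assoc, Jpow_sq, mul_one, Matrix.mulVec_mulVec] at hh

lemma PG_conj {A B A' B' : M2} (h : PG {A, B} univ) (hA : mJ * A * mJ = A')
    (hB : mJ * B * mJ = B') : PG {A', B'} univ := by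
  classical
  have hA' : mJ * A' * mJ = A := by
    rw [← hA]; simp only [mul_assoc, mJJ, mul_one]; rw [← mul_assoc, mJJ, one_mul]
  have hB' : mJ * B' * mJ = B := by
    rw [← hB]; simp only [mul_assoc, mJJ, mul_one]; rw [← mul_assoc, mJJ, one_mul]
  obtain ⟨K, d, H⟩ := h
  refine ⟨K, d, fun k => ?_⟩
  obtain ⟨G, h1, h2, h3⟩ := H k
  refine ⟨G.image (fun g => mJ * g * mJ), Finset.card_image_le.trans h1, ?_, ?_⟩
  · intro g hg
    obtain ⟨g', hg', rfl⟩ := Finset.mem_image.1 hg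
    exact Mset_conj hA hB k _ (h2 _ hg')
  · intro c _ a ha M hM
    have ha' : 0 ≤ mJ *ᵥ a := mv_nonneg J_nn ha
    obtain ⟨g, hg, hh⟩ := h3 (act c mJ) trivial _ ha' _ (Mset_conj hA' hB' k M hM)
    refine ⟨mJ * g * mJ, Finset.mem_image_of_mem _ hg, ?_⟩
    rw [← phi_act, ← phi_act] at hh
    simp only [Matrix.mulVec_mulVec] at hh
    have e : mJ * (mJ * M * mJ * mJ) = M := by
      simp only [mul_assoc, mJJ, mul_one]; rw [← mul_assoc, mJJ, one_mul]
    rwa [e, ← mul_assoc] at hh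

lemma PG_one (T : M2) : PG {1, T} univ := by
  classical
  have key : ∀ k, ∀ M ∈ Mset {1, T} k, ∃ j ≤ k, M = T ^ j := by
    intro k
    induction k with
    | zero => rintro M rfl; exact ⟨0, le_rfl, by simp⟩
    | succ k ih =>
      rintro M ⟨T', hT, N, hN, rfl⟩
      obtain ⟨j, hj, rfl⟩ := ih N hN
      rcases hT with rfl | rfl
      · exact ⟨j, by omega, by simp⟩
      · exact ⟨j + 1, by omega, by rw [pow_succ']⟩
  refine ⟨1, 1, fun k => ⟨((Finset.range (k + 1)).image (T ^ ·)).filter (· ∈ Mset {1, T} k),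
    ?_, ?_, ?_⟩⟩
  · refine (Finset.card_filter_le _ _).trans (Finset.card_image_le.trans ?_)
    simp
  · intro g hg; exact (Finset.mem_filter.1 hg).2
  · intro c _ a _ M hM
    obtain ⟨j, hj, rfl⟩ := key k M hM
    exact ⟨_, Finset.mem_filter.2 ⟨Finset.mem_image_of_mem _ (Finset.mem_range.2 (by omega)), hM⟩,
      le_rfl⟩

lemma PG_same (T : M2) : PG {T, T} univ := by
  classical
  have key : ∀ k, ∀ M ∈ Mset {T, T} k, M = T ^ k := by
    intro k
    induction k with
    | zero => rintro M rfl; simp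
    | succ k ih =>
      rintro M ⟨T', hT, N, hN, rfl⟩
      rw [ih N hN]
      rcases hT with rfl | rfl <;> rw [pow_succ']
  refine ⟨1, 0, fun k => ⟨{T ^ k}, by simp, ?_, ?_⟩⟩
  · intro g hg
    rw [Finset.mem_singleton.1 hg]
    exact pow_mem_Mset (by simp) k
  · intro c _ a _ M hM
    exact ⟨_, Finset.mem_singleton_self _, by rw [key k M hM]⟩

/-- the six nonsingular binary matrices -/
def six (T : M2) : Prop := T = 1 ∨ T = mJ ∨ T = mU ∨ T = mL ∨ T = mF ∨ T = mG

lemma PG_comm {A B : M2} (h : PG {A, B} univ) : PG {B, A} univ := by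
  rwa [Set.pair_comm]

lemma PG_six {A B : M2} (hA : six A) (hB : six B) : PG {A, B} univ := by
  have JL : PG {mJ, mL} univ := PG_conj PG_JU (by rw [mJJ, one_mul]) JUJ
  have JG : PG {mJ, mG} univ := PG_conj PG_JF (by rw [mJJ, one_mul]) JFJ
  have LF : PG {mL, mF} univ := PG_conj PG_UG JUJ JGJ
  have LG : PG {mL, mG} univ := PG_conj PG_UF JUJ JFJ
  rcases hA with rfl | rfl | rfl | rfl | rfl | rfl <;>
  rcases hB with rfl | rfl | rfl | rfl | rfl | rfl <;>
  first
  | exact PG_one _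
  | exact PG_same _
  | exact PG_comm (PG_one _)
  | exact PG_JU
  | exact PG_JF
  | exact JL
  | exact JG
  | exact LF
  | exact LG
  | exact PG_UL
  | exact PG_UF
  | exact PG_UG
  | exact PG_FG
  | exact PG_comm PG_JU
  | exact PG_comm PG_JF
  | exact PG_comm JL
  | exact PG_comm JG
  | exact PG_comm LF
  | exact PG_comm LG
  | exact PG_comm PG_UL
  | exact PG_comm PG_UF
  | exact PG_comm PG_UG
  | exact PG_comm PG_FG

lemma hull_of_phi (X Y : Set (Fin 2 → ℝ)) (hY : Y.Finite)
    (h : ∀ c : ℝ × ℝ, ∀ x ∈ X, ∃ y ∈ Y, phi c x ≤ phi c y) : X ⊆ convexHull ℝ Y := by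
  intro x hx
  by_contra hn
  obtain ⟨f, u, h1, h2⟩ := geometric_hahn_banach_closed_point (convex_convexHull ℝ Y)
    (hY.isCompact_convexHull (𝕜 := ℝ)).isClosed hn
  have hf : ∀ z : Fin 2 → ℝ, f z = phi (f ![1, 0], f ![0, 1]) z := by
    intro z
    have e : z = z 0 • ![1, 0] + z 1 • ![0, 1] := by
      ext i; fin_cases i <;> simp
    conv_lhs => rw [e]
    rw [map_add, map_smul, map_smul]
    simp only [phi, smul_eq_mul]; ring
  obtain ⟨y, hy, hle⟩ := h (f ![1, 0], f ![0, 1]) x hx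
  rw [← hf, ← hf] at hle
  have := h1 y (subset_convexHull ℝ Y hy)
  linarith

def Bd (S : Set M2) (a : Fin 2 → ℝ) (k n : ℕ) : Prop :=
  ∃ Y : Finset (Fin 2 → ℝ), Y.card ≤ n ∧ (∀ y ∈ Y, y ∈ XSeq S a k) ∧
    XSeq S a k ⊆ convexHull ℝ (Y : Set (Fin 2 → ℝ))

lemma NExt_le {S : Set M2} {a : Fin 2 → ℝ} {k n : ℕ} (h : Bd S a k n) : NExt S a k ≤ n := by
  obtain ⟨Y, h1, h2, h3⟩ := h
  have e : PHull S a k = convexHull ℝ (Y : Set (Fin 2 → ℝ)) := by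
    apply Subset.antisymm
    · exact convexHull_min h3 (convex_convexHull ℝ _)
    · exact convexHull_mono (fun y hy => h2 y hy)
  have hs : EPts S a k ⊆ (Y : Set (Fin 2 → ℝ)) := by
    unfold EPts
    rw [e]
    exact extremePoints_convexHull_subset
  have := Set.ncard_le_ncard hs Y.finite_toSet
  rw [Set.ncard_coe_finset] at this
  exact this.trans h1

def mixed (v : Fin 2 → ℝ) : Prop := v 0 * v 1 < 0

lemma not_mixed {v : Fin 2 → ℝ} (h : ¬ mixed v) : 0 ≤ v ∨ 0 ≤ -v := by
  unfold mixed at h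
  rw [not_lt] at h
  rcases mul_nonneg_iff.1 h with ⟨h0, h1⟩ | ⟨h0, h1⟩
  · left; intro i; fin_cases i <;> simpa
  · right; intro i; fin_cases i <;> simpa

lemma Bd_of_PG {S : Set M2} (h : PG S univ) : ∃ K d : ℕ, ∀ k, ∀ a : Fin 2 → ℝ, ¬ mixed a →
    Bd S a k (K * (k + 1) ^ d) := by
  classical
  obtain ⟨K, d, H⟩ := h
  refine ⟨K, d, fun k a ha => ?_⟩
  obtain ⟨G, h1, h2, h3⟩ := H k
  refine ⟨G.image (fun g => g *ᵥ a), Finset.card_image_le.trans h1, ?_, ?_⟩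
  · intro y hy
    obtain ⟨g, hg, rfl⟩ := Finset.mem_image.1 hy
    rw [XSeq_eq]
    exact ⟨g, h2 g hg, rfl⟩
  · refine hull_of_phi _ _ (Finset.finite_toSet _) ?_
    intro c x hx
    rw [XSeq_eq] at hx
    obtain ⟨M, hM, rfl⟩ := hx
    rcases not_mixed ha with ha | ha
    · obtain ⟨g, hg, hh⟩ := h3 c trivial a ha M hM
      exact ⟨g *ᵥ a, Finset.mem_coe.2 (Finset.mem_image.2 ⟨g, hg, rfl⟩), hh⟩
    · obtain ⟨g, hg, hh⟩ := h3 (-c) trivial (-a) ha M hM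
      refine ⟨g *ᵥ a, Finset.mem_coe.2 (Finset.mem_image.2 ⟨g, hg, rfl⟩), ?_⟩
      simp only [phi, Matrix.mulVec_neg, Pi.neg_apply, Prod.fst_neg, Prod.snd_neg] at *
      linarith

/-- one step of the subtractive algorithm -/
def eS (v : Fin 2 → ℝ) : Fin 2 → ℝ :=
  if v 1 ^ 2 < v 0 ^ 2 then ![v 0 + v 1, v 1] else ![v 0 + v 1, v 0]

lemma mJ_mv (v : Fin 2 → ℝ) : mJ *ᵥ v = ![v 1, v 0] := by
  ext i; fin_cases i <;> simp [mv0, mv1, mJ]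

lemma eS_J {v : Fin 2 → ℝ} (h : v 0 ^ 2 ≠ v 1 ^ 2) : eS (mJ *ᵥ v) = eS v := by
  rw [mJ_mv]
  unfold eS
  rcases lt_or_gt_of_ne h with h' | h'
  · simp [h', not_lt.2 h'.le, add_comm]
  · simp [h', not_lt.2 h'.le, add_comm]

lemma mixed_step {T : M2} (hT : six T) {v : Fin 2 → ℝ} (hv : mixed v) (hTv : mixed (T *ᵥ v)) :
    T *ᵥ v = v ∨ T *ᵥ v = mJ *ᵥ v ∨
      (v 0 ^ 2 ≠ v 1 ^ 2 ∧ (T *ᵥ v = eS v ∨ T *ᵥ v = mJ *ᵥ eS v)) := by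
  have hvv : v 0 * v 1 < 0 := hv
  have gt1 : (v 0 + v 1) * v 1 < 0 → v 1 ^ 2 < v 0 ^ 2 := by
    intro h
    have h1 : v 1 ^ 2 < - (v 0 * v 1) := by nlinarith
    by_contra hc
    push Not at hc
    nlinarith [sq_nonneg (v 0 + v 1), sq_nonneg (v 0 - v 1)]
  have gt0 : (v 0 + v 1) * v 0 < 0 → v 0 ^ 2 < v 1 ^ 2 := by
    intro h
    by_contra hc
    push Not at hc
    nlinarith [sq_nonneg (v 0 + v 1), sq_nonneg (v 0 - v 1)]
  rcases hT with rfl | rfl | rfl | rfl | rfl | rfl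
  · left; simp
  · right; left; rfl
  · have : (v 0 + v 1) * v 1 < 0 := by simpa [mixed, mv0 _ v, mv1 _ v, mU] using hTv
    have h := gt1 this
    refine Or.inr (Or.inr ⟨h.ne', Or.inl ?_⟩)
    rw [eS, if_pos h]
    ext i; fin_cases i <;> simp [mv0 _ v, mv1 _ v, mU]
  · have : (v 0 + v 1) * v 0 < 0 := by
      have : v 0 * (v 0 + v 1) < 0 := by simpa [mixed, mv0 _ v, mv1 _ v, mL] using hTv
      linarith
    have h := gt0 this
    refine Or.inr (Or.inr ⟨h.ne, Or.inr ?_⟩)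
    rw [eS, if_neg (not_lt.2 h.le), mJ_mv]
    ext i; fin_cases i <;> simp [mv0 _ v, mv1 _ v, mL]
  · have : (v 0 + v 1) * v 0 < 0 := by simpa [mixed, mv0 _ v, mv1 _ v, mF] using hTv
    have h := gt0 this
    refine Or.inr (Or.inr ⟨h.ne, Or.inl ?_⟩)
    rw [eS, if_neg (not_lt.2 h.le)]
    ext i; fin_cases i <;> simp [mv0 _ v, mv1 _ v, mF]
  · have : (v 0 + v 1) * v 1 < 0 := by
      have : v 1 * (v 0 + v 1) < 0 := by simpa [mixed, mv0 _ v, mv1 _ v, mG] using hTv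
      linarith
    have h := gt1 this
    refine Or.inr (Or.inr ⟨h.ne', Or.inr ?_⟩)
    rw [eS, if_pos h, mJ_mv]
    ext i; fin_cases i <;> simp [mv0 _ v, mv1 _ v, mG]

lemma mJJ_mv (v : Fin 2 → ℝ) : mJ *ᵥ (mJ *ᵥ v) = v := by
  rw [Matrix.mulVec_mulVec, mJJ, Matrix.one_mulVec]

def isW (a : Fin 2 → ℝ) (k : ℕ) (x : Fin 2 → ℝ) : Prop :=
  ∃ i ≤ k, x = eS^[i] a ∨ x = mJ *ᵥ (eS^[i] a)

lemma isW_step {T : M2} (hT : six T) {a v : Fin 2 → ℝ} {k : ℕ} (hw : isW a k v) (hv : mixed v)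
    (hTv : mixed (T *ᵥ v)) : isW a (k + 1) (T *ᵥ v) := by
  obtain ⟨i, hi, hw⟩ := hw
  rcases mixed_step hT hv hTv with h | h | ⟨hne, h⟩
  · exact ⟨i, by omega, by rw [h]; exact hw⟩
  · refine ⟨i, by omega, ?_⟩
    rw [h]
    rcases hw with rfl | rfl
    · right; rfl
    · left; rw [mJJ_mv]
  · have e : eS v = eS^[i + 1] a := by
      rw [Function.iterate_succ_apply']
      rcases hw with rfl | rfl
      · rfl
      · refine eS_J ?_
        rw [mJ_mv] at hne
        simpa using hne.symm
    rw [e] at h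
    exact ⟨i + 1, by omega, h⟩

lemma XSeq_step {S : Set M2} {a v : Fin 2 → ℝ} {m k : ℕ} (h : XSeq S v m ⊆ XSeq S a k) :
    XSeq S v (m + 1) ⊆ XSeq S a (k + 1) := by
  intro x hx
  simp only [XSeq, mem_iUnion, mem_image] at *
  obtain ⟨T, hT, y, hy, rfl⟩ := hx
  exact ⟨T, hT, y, h hy, rfl⟩

lemma isW_mono {a x : Fin 2 → ℝ} {k l : ℕ} (h : k ≤ l) (hw : isW a k x) : isW a l x := by
  obtain ⟨i, hi, hx⟩ := hw
  exact ⟨i, hi.trans h, hx⟩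

lemma mixed_struct {S : Set M2} (hS : ∀ T ∈ S, six T) {a : Fin 2 → ℝ} (ha : mixed a) (k : ℕ) :
    ∀ x ∈ XSeq S a k, (mixed x ∧ isW a k x) ∨ ∃ m ≤ k, ∃ v, ¬ mixed v ∧
      (∃ T ∈ S, ∃ w, isW a k w ∧ v = T *ᵥ w) ∧ x ∈ XSeq S v m ∧ XSeq S v m ⊆ XSeq S a k := by
  induction k with
  | zero =>
    intro x hx
    have : x = a := hx
    subst this
    exact Or.inl ⟨ha, 0, le_rfl, Or.inl rfl⟩
  | succ k ih =>
    intro x hx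
    have hx' := hx
    simp only [XSeq, mem_iUnion, mem_image] at hx
    obtain ⟨T, hT, y, hy, rfl⟩ := hx
    rcases ih y hy with ⟨hm, hw⟩ | ⟨m, hm, v, hv, ⟨T', hT', w, hw, e⟩, hyv, hsub⟩
    · by_cases hTy : mixed (T *ᵥ y)
      · exact Or.inl ⟨hTy, isW_step (hS T hT) hw hm hTy⟩
      · refine Or.inr ⟨0, by omega, T *ᵥ y, hTy,
          ⟨T, hT, y, isW_mono (by omega) hw, rfl⟩, rfl, ?_⟩
        intro z hz
        have : z = T *ᵥ y := hz
        rwa [this]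
    · refine Or.inr ⟨m + 1, by omega, v, hv, ⟨T', hT', w, isW_mono (by omega) hw, e⟩, ?_,
        XSeq_step hsub⟩
      simp only [XSeq, mem_iUnion, mem_image]
      exact ⟨T, hT, y, hyv, rfl⟩

lemma Bd_mono {S : Set M2} {a : Fin 2 → ℝ} {k n n' : ℕ} (h : Bd S a k n) (hn : n ≤ n') :
    Bd S a k n' := by
  obtain ⟨Y, h1, h2⟩ := h
  exact ⟨Y, h1.trans hn, h2⟩

lemma Bd_six {A B : M2} (hA : six A) (hB : six B) : ∃ K d : ℕ, ∀ k, ∀ a : Fin 2 → ℝ,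
    Bd {A, B} a k (K * (k + 1) ^ d) := by
  classical
  obtain ⟨K, d, H⟩ := Bd_of_PG (PG_six hA hB)
  refine ⟨4 * K + 2, d + 2, fun k a => ?_⟩
  have p2 : k + 1 ≤ (k + 1) ^ (d + 2) := Nat.le_self_pow (by omega) _
  by_cases ha : mixed a
  · have hS : ∀ T ∈ ({A, B} : Set M2), six T := by rintro T (rfl | rfl) <;> assumption
    have H' : ∀ m v, ∃ Y : Finset (Fin 2 → ℝ), ¬ mixed v →
        (Y.card ≤ K * (m + 1) ^ d ∧ (∀ y ∈ Y, y ∈ XSeq {A, B} v m) ∧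
          XSeq {A, B} v m ⊆ convexHull ℝ (Y : Set (Fin 2 → ℝ))) := by
      intro m v
      by_cases hv : mixed v
      · exact ⟨∅, fun h => absurd hv h⟩
      · obtain ⟨Y, hY⟩ := H m v hv
        exact ⟨Y, fun _ => hY⟩
    choose Y hY using H'
    set W : Finset (Fin 2 → ℝ) := (Finset.range (k + 1)).image (fun i => eS^[i] a) ∪
      (Finset.range (k + 1)).image (fun i => mJ *ᵥ (eS^[i] a)) with hW
    have hWc : W.card ≤ 2 * (k + 1) := by
      refine (Finset.card_union_le _ _).trans ?_
      have e1 := Finset.card_image_le (s := Finset.range (k + 1)) (f := fun i => eS^[i] a)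
      have e2 := Finset.card_image_le (s := Finset.range (k + 1))
        (f := fun i => mJ *ᵥ (eS^[i] a))
      rw [Finset.card_range] at e1 e2
      omega
    have hWm : ∀ x, isW a k x → x ∈ W := by
      rintro x ⟨i, hi, rfl | rfl⟩
      · exact Finset.mem_union_left _ (Finset.mem_image.2 ⟨i, Finset.mem_range.2 (by omega), rfl⟩)
      · exact Finset.mem_union_right _ (Finset.mem_image.2 ⟨i, Finset.mem_range.2 (by omega), rfl⟩)
    set V : Finset (Fin 2 → ℝ) := W.image (A *ᵥ ·) ∪ W.image (B *ᵥ ·) with hV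
    have hVc : V.card ≤ 4 * (k + 1) := by
      refine (Finset.card_union_le _ _).trans ?_
      have e1 := Finset.card_image_le (s := W) (f := (A *ᵥ ·))
      have e2 := Finset.card_image_le (s := W) (f := (B *ᵥ ·))
      omega
    set P : Finset (ℕ × (Fin 2 → ℝ)) := ((Finset.range (k + 1)) ×ˢ V).filter
      (fun p => ¬ mixed p.2 ∧ XSeq {A, B} p.2 p.1 ⊆ XSeq {A, B} a k) with hP
    have hPc : P.card ≤ (k + 1) * (4 * (k + 1)) := by
      refine (Finset.card_filter_le _ _).trans ?_
      rw [Finset.card_product, Finset.card_range]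
      exact Nat.mul_le_mul_left _ hVc
    refine ⟨W.filter (· ∈ XSeq {A, B} a k) ∪ P.biUnion (fun p => Y p.1 p.2), ?_, ?_, ?_⟩
    · refine (Finset.card_union_le _ _).trans ?_
      have e1 : (W.filter (· ∈ XSeq {A, B} a k)).card ≤ 2 * (k + 1) :=
        (Finset.card_filter_le _ _).trans hWc
      have e2 : (P.biUnion (fun p => Y p.1 p.2)).card ≤ P.card * (K * (k + 1) ^ d) := by
        refine Finset.card_biUnion_le_card_mul _ _ _ ?_
        intro p hp
        obtain ⟨hp1, hp2, hp3⟩ := Finset.mem_filter.1 hp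
        have hr := Finset.mem_range.1 (Finset.mem_product.1 hp1).1
        refine (hY p.1 p.2 hp2).1.trans (Nat.mul_le_mul_left _ (Nat.pow_le_pow_left (by omega) _))
      have e3 := Nat.mul_le_mul_right (K * (k + 1) ^ d) hPc
      have e4 : (k + 1) * (4 * (k + 1)) * (K * (k + 1) ^ d) = 4 * K * (k + 1) ^ (d + 2) := by ring
      rw [add_mul]
      omega
    · intro y hy
      rcases Finset.mem_union.1 hy with hy | hy
      · exact (Finset.mem_filter.1 hy).2
      · obtain ⟨p, hp, hyp⟩ := Finset.mem_biUnion.1 hy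
        obtain ⟨hp1, hp2, hp3⟩ := Finset.mem_filter.1 hp
        exact hp3 ((hY p.1 p.2 hp2).2.1 y hyp)
    · intro x hx
      rcases mixed_struct hS ha k x hx with ⟨_, hw⟩ | ⟨m, hm, v, hv, ⟨T, hT, w, hw, e⟩, hxv, hsub⟩
      · apply subset_convexHull
        rw [Finset.mem_coe]
        exact Finset.mem_union_left _ (Finset.mem_filter.2 ⟨hWm x hw, hx⟩)
      · have hvV : v ∈ V := by
          rw [e]
          rcases hT with rfl | rfl
          · exact Finset.mem_union_left _ (Finset.mem_image_of_mem _ (hWm w hw))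
          · exact Finset.mem_union_right _
              (Finset.mem_image.2 ⟨w, hWm w hw, rfl⟩)
        refine convexHull_mono ?_ ((hY m v hv).2.2 hxv)
        intro z hz
        rw [Finset.mem_coe] at hz ⊢
        refine Finset.mem_union_right _ (Finset.mem_biUnion.2 ⟨(m, v), ?_, hz⟩)
        exact Finset.mem_filter.2 ⟨Finset.mem_product.2 ⟨Finset.mem_range.2 (by omega), hvV⟩,
          hv, hsub⟩
  · refine Bd_mono (H k a ha) ?_
    have : (k + 1) ^ d ≤ (k + 1) ^ (d + 2) := Nat.pow_le_pow_right (by omega) (by omega)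
    exact Nat.mul_le_mul (by omega) this

def rk1 (A : M2) : Prop := ∃ l : ℝ × ℝ, ∃ u : Fin 2 → ℝ, ∀ v, A *ᵥ v = phi l v • u

lemma Bd_sing_step {A B : M2} (hA : rk1 A) {a : Fin 2 → ℝ} {k n : ℕ} (h : Bd {A, B} a k n) :
    Bd {A, B} a (k + 1) (n + 2) := by
  classical
  obtain ⟨l, u, hlu⟩ := hA
  obtain ⟨Y, h1, h2, h3⟩ := h
  have hne : Y.Nonempty := by
    rw [Finset.nonempty_iff_ne_empty]
    rintro rfl
    have hX : A ^ k *ᵥ a ∈ XSeq {A, B} a k := by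
      rw [XSeq_eq]; exact ⟨_, pow_mem_Mset (by simp) k, rfl⟩
    have := h3 hX
    simp at this
  obtain ⟨y1, hy1, hmin⟩ := Y.exists_min_image (phi l) hne
  obtain ⟨y2, hy2, hmax⟩ := Y.exists_max_image (phi l) hne
  have memA : ∀ y ∈ XSeq {A, B} a k, A *ᵥ y ∈ XSeq {A, B} a (k + 1) := by
    intro y hy
    simp only [XSeq, mem_iUnion, mem_image]
    exact ⟨A, by simp, y, hy, rfl⟩
  have memB : ∀ y ∈ XSeq {A, B} a k, B *ᵥ y ∈ XSeq {A, B} a (k + 1) := by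
    intro y hy
    simp only [XSeq, mem_iUnion, mem_image]
    exact ⟨B, by simp, y, hy, rfl⟩
  have himg : ∀ T : M2, ∀ Z : Set (Fin 2 → ℝ), Convex ℝ Z → (∀ y ∈ Y, T *ᵥ y ∈ Z) →
      ∀ x ∈ XSeq {A, B} a k, T *ᵥ x ∈ Z := by
    intro T Z hZ hyZ x hx
    have hc : Convex ℝ (T.mulVecLin ⁻¹' Z) := hZ.linear_preimage _
    have : convexHull ℝ (Y : Set (Fin 2 → ℝ)) ⊆ T.mulVecLin ⁻¹' Z :=
      convexHull_min (fun y hy => by simpa using hyZ y hy) hc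
    simpa using this (h3 hx)
  refine ⟨Y.image (B *ᵥ ·) ∪ {A *ᵥ y1, A *ᵥ y2}, ?_, ?_, ?_⟩
  · refine (Finset.card_union_le _ _).trans ?_
    exact add_le_add (Finset.card_image_le.trans h1) Finset.card_le_two
  · intro y hy
    simp only [Finset.mem_union, Finset.mem_image, Finset.mem_insert, Finset.mem_singleton] at hy
    rcases hy with ⟨z, hz, rfl⟩ | rfl | rfl
    · exact memB z (h2 z hz)
    · exact memA y1 (h2 _ hy1)
    · exact memA y2 (h2 _ hy2)
  · intro x hx
    simp only [XSeq, mem_iUnion, mem_image] at hx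
    obtain ⟨T, hT, y, hy, rfl⟩ := hx
    rcases hT with rfl | rfl
    · refine himg _ _ (convex_convexHull ℝ _) ?_ y hy
      intro z hz
      have hseg : T *ᵥ z ∈ segment ℝ (T *ᵥ y1) (T *ᵥ y2) := by
        have : phi l z ∈ segment ℝ (phi l y1) (phi l y2) := by
          rw [segment_eq_Icc (hmin y2 hy2)]
          exact ⟨hmin z hz, hmax z hz⟩
        obtain ⟨p, q, hp, hq, hpq, e⟩ := this
        refine ⟨p, q, hp, hq, hpq, ?_⟩
        rw [hlu, hlu, hlu, smul_smul, smul_smul, ← add_smul, ← e]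
        simp
      refine (convex_convexHull ℝ _).segment_subset ?_ ?_ hseg <;>
      · apply subset_convexHull
        simp
    · refine himg _ _ (convex_convexHull ℝ _) ?_ y hy
      intro z hz
      apply subset_convexHull
      rw [Finset.mem_coe]
      exact Finset.mem_union_left _ (Finset.mem_image.2 ⟨z, hz, rfl⟩)

lemma Bd_sing {A B : M2} (hA : rk1 A) (a : Fin 2 → ℝ) (k : ℕ) :
    Bd {A, B} a k (2 * (k + 1) ^ 1) := by
  suffices h : Bd {A, B} a k (2 * k + 1) from Bd_mono h (by rw [pow_one]; omega)
  induction k with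
  | zero => exact ⟨{a}, by simp, by simp [XSeq], by simp [XSeq]⟩
  | succ k ih => exact Bd_mono (Bd_sing_step hA ih) (by omega)

lemma binary_cases (A : M2) (hA : ∀ i j, A i j = 0 ∨ A i j = 1) : six A ∨ rk1 A := by
  have ext2 : ∀ M N : M2, M 0 0 = N 0 0 → M 0 1 = N 0 1 → M 1 0 = N 1 0 → M 1 1 = N 1 1 →
      M = N := by
    intro M N h1 h2 h3 h4
    ext i j; fin_cases i <;> fin_cases j <;> assumption
  have rowz : A 0 0 = 0 → A 0 1 = 0 → rk1 A := by
    intro h1 h2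
    refine ⟨(A 1 0, A 1 1), ![0, 1], fun v => ?_⟩
    ext i; fin_cases i <;> simp [mv0 _ v, mv1 _ v, phi, h1, h2]
  have rowz' : A 1 0 = 0 → A 1 1 = 0 → rk1 A := by
    intro h1 h2
    refine ⟨(A 0 0, A 0 1), ![1, 0], fun v => ?_⟩
    ext i; fin_cases i <;> simp [mv0 _ v, mv1 _ v, phi, h1, h2]
  have rowe : A 0 0 = A 1 0 → A 0 1 = A 1 1 → rk1 A := by
    intro h1 h2
    refine ⟨(A 0 0, A 0 1), ![1, 1], fun v => ?_⟩
    ext i; fin_cases i <;> simp [mv0 _ v, mv1 _ v, phi, h1, h2]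
  rcases hA 0 0 with a | a <;> rcases hA 0 1 with b | b <;> rcases hA 1 0 with c | c <;>
    rcases hA 1 1 with d | d <;>
  first
  | exact Or.inr (rowz a b)
  | exact Or.inr (rowz' c d)
  | exact Or.inr (rowe (a.trans c.symm) (b.trans d.symm))
  | (left; unfold six
     first
     | (refine Or.inl (ext2 _ _ ?_ ?_ ?_ ?_) <;>
          simp [a, b, c, d] <;> done)
     | (refine Or.inr (Or.inl (ext2 _ _ ?_ ?_ ?_ ?_)) <;>
          simp [a, b, c, d, mJ] <;> done)
     | (refine Or.inr (Or.inr (Or.inl (ext2 _ _ ?_ ?_ ?_ ?_))) <;>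
          simp [a, b, c, d, mU] <;> done)
     | (refine Or.inr (Or.inr (Or.inr (Or.inl (ext2 _ _ ?_ ?_ ?_ ?_)))) <;>
          simp [a, b, c, d, mL] <;> done)
     | (refine Or.inr (Or.inr (Or.inr (Or.inr (Or.inl (ext2 _ _ ?_ ?_ ?_ ?_))))) <;>
          simp [a, b, c, d, mF] <;> done)
     | (refine Or.inr (Or.inr (Or.inr (Or.inr (Or.inr (ext2 _ _ ?_ ?_ ?_ ?_))))) <;>
          simp [a, b, c, d, mG] <;> done))

lemma Bd_binary (A B : M2)
    (hA : ∀ i j, A i j = 0 ∨ A i j = 1) (hB : ∀ i j, B i j = 0 ∨ B i j = 1) :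
    ∃ K d : ℕ, ∀ k, ∀ a : Fin 2 → ℝ, Bd {A, B} a k (K * (k + 1) ^ d) := by
  rcases binary_cases A hA with hA | hA
  · rcases binary_cases B hB with hB | hB
    · exact Bd_six hA hB
    · refine ⟨2, 1, fun k a => ?_⟩
      rw [Set.pair_comm]
      exact Bd_sing hB a k
  · exact ⟨2, 1, fun k a => Bd_sing hA a k⟩


/-- Any pair of 2×2 binary matrices has the oligo-vertex property. -/
theorem stmt5 (A B : Matrix (Fin 2) (Fin 2) ℝ)
    (hA : ∀ i j, A i j = 0 ∨ A i j = 1) (hB : ∀ i j, B i j = 0 ∨ B i j = 1) :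
    ∃ α : ℝ, 0 < α ∧ ∃ d : ℝ, 0 < d ∧ ∃ k₀ : ℕ, ∀ k : ℕ, k₀ ≤ k →
      ∀ a : Fin 2 → ℝ, (NExt {A, B} a k : ℝ) ≤ α * (k : ℝ) ^ d := by
  obtain ⟨K, d, H⟩ := Bd_binary A B hA hB
  refine ⟨((K : ℝ) + 1) * 2 ^ (d + 1), by positivity, ((d + 1 : ℕ) : ℝ), by positivity, 1,
    fun k hk a => ?_⟩
  have h : NExt {A, B} a k ≤ (K + 1) * 2 ^ (d + 1) * k ^ (d + 1) := by
    refine (NExt_le (H k a)).trans ?_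
    rw [mul_assoc, ← mul_pow]
    refine Nat.mul_le_mul (by omega) ?_
    calc (k + 1) ^ d ≤ (k + 1) ^ (d + 1) := Nat.pow_le_pow_right (by omega) (by omega)
      _ ≤ (2 * k) ^ (d + 1) := Nat.pow_le_pow_left (by omega) _
  rw [Real.rpow_natCast]
  exact_mod_cast h

end
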